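/- Suppose L is a metric flag labeled triangulation of the 2-sphere. Let D₁ and D₂ be Seifert subcomplexes of L, and let C₁ ⊆ D₁ and C₂ ⊆ D₂ be Euclidean 4-circuits each of whose edges lies in at most one 2-simplex of the containing Seifert subcomplex (boundary 4-circuits). If C₁ and C₂ have two edges in common which share a vertex, then D₁ = D₂. -/

import Mathlib

open Geometry

/-- The ambient space for our simplicial complexes. -/
abbrev E3 : Type := EuclideanSpace ℝ (Fin 3)

noncomputable instance : DecidableEq E3 := Classical.decEq _

namespace CoxOrb

variable (L : SimplicialComplex ℝ E3) (m : E3 → E3 → ℕ)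

/-- `L` is a labeled triangulation of the 2-sphere with edge labeling `m`:
`L` is finite, its underlying space is homeomorphic to the 2-sphere, and `m`
is symmetric with `m s t ≥ 2` on every edge `{s, t}` of `L`. -/
structure IsLabeledS2 : Prop where
  finite : L.faces.Finite
  sphere : Nonempty (L.space ≃ₜ (Metric.sphere (0 : E3) 1 : Set E3))
  symm : ∀ s t : E3, m s t = m t s
  two_le : ∀ s t : E3, s ≠ t → ({s, t} : Finset E3) ∈ L.faces → 2 ≤ m s t

/-- `L` with labeling `m` is metric flag: three pairwise-joined vertices span a
2-simplex iff the corresponding angle sum `π/m_st + π/m_tu + π/m_us` exceeds `π`. -/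
def MetricFlag : Prop :=
  ∀ s t u : E3, s ≠ t → t ≠ u → s ≠ u →
    ({s, t} : Finset E3) ∈ L.faces → ({t, u} : Finset E3) ∈ L.faces →
    ({s, u} : Finset E3) ∈ L.faces →
    (({s, t, u} : Finset E3) ∈ L.faces ↔
      1 / (m s t : ℝ) + 1 / (m t u : ℝ) + 1 / (m u s : ℝ) > 1)

/-- The link of a vertex `s`, as a set of faces of `L`. -/
def link (s : E3) : Set (Finset E3) :=
  {F | F ∈ L.faces ∧ s ∉ F ∧ insert s F ∈ L.faces}

/-- The closed star of a vertex `s`: all faces of `L` contained in some face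
containing `s`. -/
def star (s : E3) : Set (Finset E3) :=
  {F | F ∈ L.faces ∧ ∃ G ∈ L.faces, s ∈ G ∧ F ⊆ G}

/-- The vertices of the link of `s`. -/
def linkVerts (s : E3) : Set E3 :=
  {v | v ≠ s ∧ ({s, v} : Finset E3) ∈ L.faces}

/-- A set of faces `A` is a full subcomplex of `L`: every face of `L` all of
whose vertices are vertices of `A` belongs to `A`. -/
def IsFullSubcomplex (A : Set (Finset E3)) : Prop :=
  A ⊆ L.faces ∧ ∀ F ∈ L.faces, (∀ v ∈ F, ({v} : Finset E3) ∈ A) → F ∈ A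

/-- `s` is a 3-Euclidean vertex of `L`: it has valence three and the labels on
the three edges of its link have reciprocals summing to one. -/
def IsThreeEuclidean (s : E3) : Prop :=
  ({s} : Finset E3) ∈ L.faces ∧
  ∃ s₀ s₁ s₂ : E3, s₀ ≠ s₁ ∧ s₁ ≠ s₂ ∧ s₀ ≠ s₂ ∧
    linkVerts L s = {s₀, s₁, s₂} ∧
    1 / (m s₀ s₁ : ℝ) + 1 / (m s₁ s₂ : ℝ) + 1 / (m s₂ s₀ : ℝ) = 1

/-- `s` is a 4-Euclidean vertex of `L`: it has valence four, its link is the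
4-circuit on `v 0, v 1, v 2, v 3` (in cyclic order), and the labels on the
edges of the link are all `2`. -/
def IsFourEuclidean (s : E3) : Prop :=
  ({s} : Finset E3) ∈ L.faces ∧
  ∃ v : Fin 4 → E3, Function.Injective v ∧
    linkVerts L s = {v 0, v 1, v 2, v 3} ∧
    (∀ i : Fin 4, ({s, v i, v (i + 1)} : Finset E3) ∈ L.faces) ∧
    (∀ i : Fin 4, m (v i) (v (i + 1)) = 2)

/-- `L` is the boundary complex of a 3-simplex: four pairwise-joined vertices
spanning four 2-simplices. -/
def IsBoundaryOfThreeSimplex : Prop :=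
  ∃ a b c d : E3, a ≠ b ∧ a ≠ c ∧ a ≠ d ∧ b ≠ c ∧ b ≠ d ∧ c ≠ d ∧
    (∀ v : E3, ({v} : Finset E3) ∈ L.faces ↔ v = a ∨ v = b ∨ v = c ∨ v = d) ∧
    ({a, b, c} : Finset E3) ∈ L.faces ∧ ({a, b, d} : Finset E3) ∈ L.faces ∧
    ({a, c, d} : Finset E3) ∈ L.faces ∧ ({b, c, d} : Finset E3) ∈ L.faces

/-- `L` is the suspension of a 3-gon. -/
def IsSuspensionOfThreeGon : Prop :=
  ∃ t t' s₀ s₁ s₂ : E3, [t, t', s₀, s₁, s₂].Pairwise (· ≠ ·) ∧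
    (∀ v : E3, ({v} : Finset E3) ∈ L.faces ↔ v = t ∨ v = t' ∨ v = s₀ ∨ v = s₁ ∨ v = s₂) ∧
    ({s₀, s₁} : Finset E3) ∈ L.faces ∧ ({s₁, s₂} : Finset E3) ∈ L.faces ∧
    ({s₀, s₂} : Finset E3) ∈ L.faces ∧
    ({t, s₀} : Finset E3) ∈ L.faces ∧ ({t, s₁} : Finset E3) ∈ L.faces ∧
    ({t, s₂} : Finset E3) ∈ L.faces ∧
    ({t', s₀} : Finset E3) ∈ L.faces ∧ ({t', s₁} : Finset E3) ∈ L.faces ∧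
    ({t', s₂} : Finset E3) ∈ L.faces ∧
    ({t, t'} : Finset E3) ∉ L.faces

/-- The simplicial join of the subcomplex `Z` with the two points `t, t'`. -/
def joinSusp (Z : Set (Finset E3)) (t t' : E3) : Set (Finset E3) :=
  Z ∪ {{t}, {t'}} ∪ ((fun F => insert t F) '' Z) ∪ ((fun F => insert t' F) '' Z)

/-- `T` is the right-angled suspension in `L` of the subcomplex `Z` with
suspension points `t, t'` (not joined by an edge of `T`): every edge from a
suspension point to a vertex of `Z` is labeled `2`. -/
structure IsRASuspData (T Z : Set (Finset E3)) (t t' : E3) : Prop where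
  subset : T ⊆ L.faces
  zsubset : Z ⊆ L.faces
  zdown : ∀ F ∈ Z, ∀ G : Finset E3, G ⊆ F → G.Nonempty → G ∈ Z
  znonempty : Z.Nonempty
  tne : t ≠ t'
  t_notin : ∀ F ∈ Z, t ∉ F
  t'_notin : ∀ F ∈ Z, t' ∉ F
  labels : ∀ v : E3, ({v} : Finset E3) ∈ Z → m t v = 2 ∧ m t' v = 2
  eq : T = joinSusp Z t t'

/-- `T` is a right-angled suspension in `L`. -/
def IsRASusp (T : Set (Finset E3)) : Prop :=
  ∃ Z t t', IsRASuspData L m T Z t t'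

/-- The base `Z` of the suspension is neither a single vertex nor a single
edge, so that the suspension is infinite. -/
def InfiniteBase (Z : Set (Finset E3)) : Prop :=
  (¬ ∃ v : E3, Z = {({v} : Finset E3)}) ∧
  (¬ ∃ u v : E3, u ≠ v ∧ Z = {({u} : Finset E3), ({v} : Finset E3), ({u, v} : Finset E3)})

/-- `T` is an infinite, maximal right-angled suspension in `L`: it is an
RA-suspension of a full subcomplex which is neither a vertex nor an edge, and
`T` is not properly contained in another RA-suspension. -/
def IsInfMaxRASusp (T : Set (Finset E3)) : Prop :=
  (∃ Z t t', IsRASuspData L m T Z t t' ∧ InfiniteBase Z ∧ IsFullSubcomplex L Z) ∧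
  ∀ T', IsRASusp L m T' → T ⊆ T' → T = T'

/-- `v 0, v 1, v 2, v 3` (in cyclic order) form a Euclidean 4-circuit of `L`:
all four edge labels are `2` and the circuit is not the boundary of the union
of two 2-simplices of `L` sharing an edge. -/
def IsEuclidean4Circuit (v : Fin 4 → E3) : Prop :=
  Function.Injective v ∧
  (∀ i : Fin 4, ({v i, v (i + 1)} : Finset E3) ∈ L.faces) ∧
  (∀ i : Fin 4, m (v i) (v (i + 1)) = 2) ∧
  ¬ ((({v 0, v 1, v 2} : Finset E3) ∈ L.faces ∧ ({v 0, v 2, v 3} : Finset E3) ∈ L.faces) ∨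
     (({v 1, v 2, v 3} : Finset E3) ∈ L.faces ∧ ({v 0, v 1, v 3} : Finset E3) ∈ L.faces))

/-- The subcomplex consisting of the vertices and edges of the 4-circuit `v`. -/
def circuitComplex (v : Fin 4 → E3) : Set (Finset E3) :=
  {F | (∃ i : Fin 4, F = {v i}) ∨ (∃ i : Fin 4, F = {v i, v (i + 1)})}

/-- `T` is the right-angled cone on a Euclidean 4-circuit: the closed star of a
vertex `c` of valence four whose link is a Euclidean 4-circuit, all four edges
containing `c` being labeled `2`. -/
def IsRAConeOn4Circuit (T : Set (Finset E3)) : Prop :=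
  ∃ (c : E3) (v : Fin 4 → E3), IsEuclidean4Circuit L m v ∧
    linkVerts L c = {v 0, v 1, v 2, v 3} ∧
    (∀ i : Fin 4, ({c, v i, v (i + 1)} : Finset E3) ∈ L.faces) ∧
    (∀ i : Fin 4, m c (v i) = 2) ∧
    T = star L c

/-- The generating relation for Seifert subcomplexes: two infinite, maximal
RA-suspensions whose intersection is a Euclidean 4-circuit. -/
def SeifertRel (S S' : Set (Finset E3)) : Prop :=
  IsInfMaxRASusp L m S ∧ IsInfMaxRASusp L m S' ∧
  ∃ v : Fin 4 → E3, IsEuclidean4Circuit L m v ∧ S ∩ S' = circuitComplex v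

/-- `D` is a Seifert subcomplex of `L`: the union of the members of an
equivalence class of infinite, maximal RA-suspensions under the equivalence
relation generated by `SeifertRel`. -/
def IsSeifertSubcomplex (D : Set (Finset E3)) : Prop :=
  ∃ S₀, IsInfMaxRASusp L m S₀ ∧
    D = ⋃₀ {S | IsInfMaxRASusp L m S ∧ Relation.EqvGen (SeifertRel L m) S₀ S}

end CoxOrb

open CoxOrb

/-! ### Continuous logarithms and non-planarity of `K₅` and `K₃,₃` -/

/-- The change of a continuous logarithm along a path. -/
theorem pl_log_change {g₁ g₂ : ℝ → ℂ} (h₁ : Continuous g₁) (h₂ : Continuous g₂) {c : ℂ}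
    (h : ∀ x, Complex.exp (g₁ x) = c * Complex.exp (g₂ x)) :
    g₁ 1 - g₁ 0 = g₂ 1 - g₂ 0 := by
  have hs : ∀ a : ℝ, (⟨fun x => Complex.exp (g₁ x), by fun_prop⟩ : C(ℝ, ℂ)) a ∈ ({0}ᶜ : Set ℂ) := by
    intro a; simp [Complex.exp_ne_zero]
  obtain ⟨F, -, hF⟩ := Complex.isCoveringMapOn_exp.existsUnique_continuousMap_lifts
    (⟨fun x => Complex.exp (g₁ x), by fun_prop⟩ : C(ℝ, ℂ)) (a₀ := 0) (e₀ := g₁ 0) rfl hs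
  have e1 := hF ⟨g₁, h₁⟩ ⟨rfl, rfl⟩
  have e2 := hF ⟨fun x => g₂ x + (g₁ 0 - g₂ 0), by fun_prop⟩ ⟨by simp, by
    ext x
    have h0 := h 0
    simp only [ContinuousMap.coe_mk, Function.comp, Complex.exp_add, Complex.exp_sub]
    rw [h0, h x]
    field_simp [Complex.exp_ne_zero]⟩
  have e3 := congrArg (fun f : C(ℝ, ℂ) => f 1) (e1.trans e2.symm)
  simp only [ContinuousMap.coe_mk] at e3
  rw [e3]; ring

theorem pl_log_exists (f : ℝ × ℝ → ℂ) (hf : Continuous f) (h0 : ∀ x, f x ≠ 0) :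
    ∃ g : ℝ × ℝ → ℂ, Continuous g ∧ ∀ x, Complex.exp (g x) = f x := by
  obtain ⟨F, ⟨-, hF⟩, -⟩ := Complex.isCoveringMapOn_exp.existsUnique_continuousMap_lifts
    (⟨f, hf⟩ : C(ℝ × ℝ, ℂ)) (a₀ := 0) (e₀ := Complex.log (f 0)) (Complex.exp_log (h0 0))
    (fun a => by simp [h0])
  exact ⟨F, F.continuous, fun x => congrFun hF x⟩

/-- The order sign. -/
def plEps {k : ℕ} (u v : Fin k) : ℤ := if u < v then -1 else 1

/-- The core parity computation. -/
theorem pl_core {k : ℕ} (P : Fin k → ℂ) (hP : Function.Injective P)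
    (γ : Fin k → Fin k → ℝ → ℂ) (hγ : ∀ i j, Continuous (γ i j))
    (E : Fin k → Fin k → Prop) (h0 : ∀ i j, E i j → γ i j 0 = P i)
    (h1 : ∀ i j, E i j → γ i j 1 = P j)
    (hd : ∀ a b c d, E a b → E c d → a ≠ c → a ≠ d → b ≠ c → b ≠ d →
      ∀ s t, γ a b s ≠ γ c d t) :
    ∃ n : Fin k → Fin k → Fin k → ℤ, ∀ a b c d, E a b → E c d → a ≠ c → a ≠ d → b ≠ c → b ≠ d →
      2 * (n c a b - n d a b + n b c d - n a c d) + plEps b c - plEps a c + plEps d b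
        - plEps d a = 0 := by
  classical
  let l : Fin k → Fin k → ℂ := fun u v => if u < v then Complex.log (P u - P v) else
    Complex.log (P v - P u) + Real.pi * Complex.I
  have hl : ∀ u v, u ≠ v → Complex.exp (l u v) = P u - P v := by
    intro u v huv
    simp only [l]
    split_ifs with h
    · exact Complex.exp_log (sub_ne_zero.2 (hP.ne huv))
    · rw [Complex.exp_add, Complex.exp_log (sub_ne_zero.2 (hP.ne huv.symm)), Complex.exp_pi_mul_I]
      ring
  have hl2 : ∀ u v, u ≠ v → l u v - l v u = plEps u v * (Real.pi * Complex.I) := by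
    intro u v huv
    rcases lt_or_gt_of_ne huv with h | h
    · simp [l, plEps, h, not_lt.2 h.le]
    · simp [l, plEps, h, not_lt.2 h.le]
  have hn : ∀ v a b, ∃ n : ℤ, E a b → v ≠ a → v ≠ b → ∀ g : ℝ → ℂ, Continuous g →
      ∀ c : ℂ, (∀ s, Complex.exp (g s) = c * (γ a b s - P v)) →
      g 1 - g 0 = l b v - l a v + n * (2 * Real.pi * Complex.I) := by
    intro v a b
    by_cases H : E a b ∧ v ≠ a ∧ v ≠ b ∧ ∃ g : ℝ → ℂ, Continuous g ∧
      ∃ c : ℂ, (∀ s, Complex.exp (g s) = c * (γ a b s - P v))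
    · obtain ⟨hE, hva, hvb, g, hg, c, hc⟩ := H
      have hc0 : c ≠ 0 := by
        rintro rfl
        have := hc 0
        simp [Complex.exp_ne_zero] at this
      have : Complex.exp (g 1 - g 0) = Complex.exp (l b v - l a v) := by
        rw [Complex.exp_sub, Complex.exp_sub, hc, hc, hl _ _ hvb.symm, hl _ _ hva.symm, h0 _ _ hE,
          h1 _ _ hE, mul_div_mul_left _ _ hc0]
      obtain ⟨n, hn⟩ := Complex.exp_eq_exp_iff_exists_int.1 this
      refine ⟨n, fun _ _ _ g' hg' c' hc' => ?_⟩
      rw [← hn]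
      refine pl_log_change hg' hg (c := c' / c) fun x => ?_
      rw [hc, hc']; field_simp
    · refine ⟨0, fun hE h2 h3 g hg c hc => (H ⟨hE, h2, h3, g, hg, c, hc⟩).elim⟩
  choose n hn using hn
  refine ⟨n, fun a b c d hab hcd hac had hbc hbd => ?_⟩
  obtain ⟨g, hg, hge⟩ := pl_log_exists (fun x => γ a b x.1 - γ c d x.2)
    (((hγ a b).comp continuous_fst).sub ((hγ c d).comp continuous_snd))
    (fun x => sub_ne_zero.2 (hd a b c d hab hcd hac had hbc hbd _ _))
  have A1 := hn c a b hab hac.symm hbc.symm (fun s => g (s, 0)) (by fun_prop) 1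
    (fun s => by rw [hge]; simp [h0 _ _ hcd])
  have A2 := hn d a b hab had.symm hbd.symm (fun s => g (s, 1)) (by fun_prop) 1
    (fun s => by rw [hge]; simp [h1 _ _ hcd])
  have A3 := hn a c d hcd hac had (fun s => g (0, s)) (by fun_prop) (-1)
    (fun s => by rw [hge]; simp [h0 _ _ hab])
  have A4 := hn b c d hcd hbc hbd (fun s => g (1, s)) (by fun_prop) (-1)
    (fun s => by rw [hge]; simp [h1 _ _ hab])
  have B1 := hl2 b c hbc
  have B2 := hl2 a c hac
  have B3 := hl2 d b hbd.symm
  have B4 := hl2 d a had.symm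
  have key : ((2 * (n c a b - n d a b + n b c d - n a c d) + plEps b c - plEps a c + plEps d b
        - plEps d a : ℤ) : ℂ) * (Real.pi * Complex.I) = 0 := by
    push_cast
    linear_combination (-1) * A1 + A2 - A4 + A3 - B1 + B2 - B3 + B4
  have hpi : (Real.pi * Complex.I : ℂ) ≠ 0 := by
    simp [Real.pi_ne_zero]
  exact_mod_cast (mul_eq_zero.1 key).resolve_right hpi

theorem pl_K5 (P : Fin 5 → ℂ) (hP : Function.Injective P)
    (γ : Fin 5 → Fin 5 → ℝ → ℂ) (hγ : ∀ i j, Continuous (γ i j))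
    (h0 : ∀ i j, i < j → γ i j 0 = P i)
    (h1 : ∀ i j, i < j → γ i j 1 = P j)
    (hd : ∀ a b c d, a < b → c < d → a ≠ c → a ≠ d → b ≠ c → b ≠ d →
      ∀ s t, γ a b s ≠ γ c d t) : False := by
  obtain ⟨n, hn⟩ := pl_core P hP γ hγ (fun i j => i < j) h0 h1 hd
  have H : ∀ (a b c d : Fin 5) (x : ℤ), (a < b ∧ c < d ∧ a ≠ c ∧ a ≠ d ∧ b ≠ c ∧ b ≠ d) →
      2 * x = plEps b c - plEps a c + plEps d b - plEps d a →
      n c a b - n d a b + n b c d - n a c d + x = 0 := by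
    rintro a b c d x ⟨h1, h2, h3, h4, h5, h6⟩ hx
    have := hn a b c d h1 h2 h3 h4 h5 h6
    omega
  have e0123 := H 0 1 2 3 (0) (by decide) (by decide)
  have e0124 := H 0 1 2 4 (0) (by decide) (by decide)
  have e0134 := H 0 1 3 4 (0) (by decide) (by decide)
  have e0213 := H 0 2 1 3 (1) (by decide) (by decide)
  have e0214 := H 0 2 1 4 (1) (by decide) (by decide)
  have e0234 := H 0 2 3 4 (0) (by decide) (by decide)
  have e0312 := H 0 3 1 2 (0) (by decide) (by decide)
  have e0314 := H 0 3 1 4 (1) (by decide) (by decide)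
  have e0324 := H 0 3 2 4 (1) (by decide) (by decide)
  have e0412 := H 0 4 1 2 (0) (by decide) (by decide)
  have e0413 := H 0 4 1 3 (0) (by decide) (by decide)
  have e0423 := H 0 4 2 3 (0) (by decide) (by decide)
  have e1234 := H 1 2 3 4 (0) (by decide) (by decide)
  have e1324 := H 1 3 2 4 (1) (by decide) (by decide)
  have e1423 := H 1 4 2 3 (0) (by decide) (by decide)
  omega

theorem pl_K33 (P : Fin 6 → ℂ) (hP : Function.Injective P)
    (γ : Fin 6 → Fin 6 → ℝ → ℂ) (hγ : ∀ i j, Continuous (γ i j))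
    (h0 : ∀ i j, i < 3 → 3 ≤ j → γ i j 0 = P i)
    (h1 : ∀ i j, i < 3 → 3 ≤ j → γ i j 1 = P j)
    (hd : ∀ a b c d, a < 3 → 3 ≤ b → c < 3 → 3 ≤ d → a ≠ c → b ≠ d →
      ∀ s t, γ a b s ≠ γ c d t) : False := by
  obtain ⟨n, hn⟩ := pl_core P hP γ hγ (fun i j => i < 3 ∧ 3 ≤ j) (fun i j h => h0 i j h.1 h.2)
    (fun i j h => h1 i j h.1 h.2)
    (fun a b c d h1 h2 h3 _ _ h4 => hd a b c d h1.1 h1.2 h2.1 h2.2 h3 h4)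
  have H : ∀ (a b c d : Fin 6) (x : ℤ), (a < 3 ∧ 3 ≤ b ∧ c < 3 ∧ 3 ≤ d ∧ a ≠ c ∧ b ≠ d) →
      2 * x = plEps b c - plEps a c + plEps d b - plEps d a →
      n c a b - n d a b + n b c d - n a c d + x = 0 := by
    rintro a b c d x ⟨h1, h2, h3, h4, h5, h6⟩ hx
    have := hn a b c d ⟨h1, h2⟩ ⟨h3, h4⟩ h5 (by omega) (by omega) h6
    omega
  have e0314 := H 0 3 1 4 (1) (by decide) (by decide)
  have e0315 := H 0 3 1 5 (1) (by decide) (by decide)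
  have e0413 := H 0 4 1 3 (0) (by decide) (by decide)
  have e0415 := H 0 4 1 5 (1) (by decide) (by decide)
  have e0513 := H 0 5 1 3 (0) (by decide) (by decide)
  have e0514 := H 0 5 1 4 (0) (by decide) (by decide)
  have e0324 := H 0 3 2 4 (1) (by decide) (by decide)
  have e0325 := H 0 3 2 5 (1) (by decide) (by decide)
  have e0423 := H 0 4 2 3 (0) (by decide) (by decide)
  have e0425 := H 0 4 2 5 (1) (by decide) (by decide)
  have e0523 := H 0 5 2 3 (0) (by decide) (by decide)
  have e0524 := H 0 5 2 4 (0) (by decide) (by decide)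
  have e1324 := H 1 3 2 4 (1) (by decide) (by decide)
  have e1325 := H 1 3 2 5 (1) (by decide) (by decide)
  have e1423 := H 1 4 2 3 (0) (by decide) (by decide)
  have e1425 := H 1 4 2 5 (1) (by decide) (by decide)
  have e1523 := H 1 5 2 3 (0) (by decide) (by decide)
  have e1524 := H 1 5 2 4 (0) (by decide) (by decide)
  omega

/-! ### Planarity of the 1-skeleton -/

theorem pl_sphere_compl_finite {F : Set (Metric.sphere (0 : E3) 1)} (hF : F.Finite)
    (hne : F.Nonempty) : IsPreconnected Fᶜ := by
  obtain ⟨x, hx⟩ := hne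
  have : Fact (Module.finrank ℝ E3 = 2 + 1) := ⟨by simp⟩
  set S := stereographic' 2 x with hS
  have hc : IsPreconnected ((S '' (F \ {x}))ᶜ) :=
    (Set.Countable.isConnected_compl_of_one_lt_rank (by
      rw [rank_eq_card_basis (EuclideanSpace.basisFun (Fin 2) ℝ).toBasis]; simp)
      ((hF.subset Set.sdiff_subset).image S).countable).isPreconnected
  have him := hc.image S.symm (S.continuousOn_symm.mono (by simp [hS]))
  convert him using 1
  ext y
  constructor
  · intro hy
    have hyx : y ≠ x := fun h => hy (h ▸ hx)
    have hys : y ∈ S.source := by simp [hS, hyx]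
    refine ⟨S y, ?_, S.left_inv hys⟩
    rintro ⟨z, ⟨hz, hzx⟩, hzy⟩
    have hzs : z ∈ S.source := by
      have : z ≠ x := hzx
      simp [hS, this]
    exact hy (S.injOn hzs hys hzy ▸ hz)
  · rintro ⟨z, hz, rfl⟩ hzF
    have hzt : z ∈ S.target := by simp [hS]
    apply hz
    refine ⟨S.symm z, ⟨hzF, ?_⟩, S.right_inv hzt⟩
    have := S.map_target hzt
    simpa [hS] using this

theorem pl_plane_chart (x : Metric.sphere (0 : E3) 1) :
    ∃ ψ : Metric.sphere (0 : E3) 1 → ℂ, ContinuousOn ψ {x}ᶜ ∧ Set.InjOn ψ {x}ᶜ := by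
  have : Fact (Module.finrank ℝ E3 = 2 + 1) := ⟨by simp⟩
  set S := stereographic' 2 x with hS
  have hs : S.source = {x}ᶜ := by simp [hS]
  refine ⟨fun y => Complex.orthonormalBasisOneI.repr.symm (S y), ?_, ?_⟩
  · rw [← hs]
    exact (LinearIsometryEquiv.continuous _).comp_continuousOn S.continuousOn
  · rw [← hs]
    exact (LinearIsometryEquiv.injective _).comp_injOn S.injOn

/-- The underlying space of the 1-skeleton. -/
def plSkel (L : SimplicialComplex ℝ E3) : Set E3 :=
  {x | ∃ F ∈ L.faces, F.card ≤ 2 ∧ x ∈ convexHull ℝ (F : Set E3)}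

theorem pl_skel_ne (L : SimplicialComplex ℝ E3) (m : E3 → E3 → ℕ) (hL : IsLabeledS2 L m)
    {a b c d : E3} (hab : a ≠ b) (hcd : c ≠ d) (h1 : ({a, b} : Finset E3) ∈ L.faces)
    (h2 : ({c, d} : Finset E3) ∈ L.faces) (hne : ({a, b} : Finset E3) ≠ {c, d}) :
    ∃ x ∈ L.space, x ∉ plSkel L := by
  by_contra hcon
  push Not at hcon
  obtain ⟨φ⟩ := hL.sphere
  have hvf : L.vertices.Finite := by
    rw [L.vertices_eq]
    exact hL.finite.biUnion fun F _ => F.finite_toSet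
  -- complement of the vertices is preconnected
  have hpre : IsPreconnected (L.space \ L.vertices) := by
    have hF : ((fun x : L.space => (x : E3)) ⁻¹' L.vertices).Finite :=
      hvf.preimage Subtype.val_injective.injOn
    have ha : a ∈ L.vertices := L.down_closed h1 (by simp) (by simp)
    have hne : ((fun x : L.space => (x : E3)) ⁻¹' L.vertices).Nonempty :=
      ⟨⟨a, L.vertices_subset_space ha⟩, ha⟩
    have := pl_sphere_compl_finite (hF.image φ) (hne.image φ)
    have h3 := (this.image φ.symm φ.symm.continuous.continuousOn).image Subtype.val
      continuous_subtype_val.continuousOn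
    convert h3 using 1
    ext y
    constructor
    · rintro ⟨hy, hyv⟩
      refine ⟨⟨y, hy⟩, ⟨φ ⟨y, hy⟩, ?_, by simp⟩, rfl⟩
      rintro ⟨z, hz, hzy⟩
      rw [φ.injective hzy] at hz
      exact hyv hz
    · rintro ⟨_, ⟨z, hz, rfl⟩, rfl⟩
      refine ⟨(φ.symm z).2, fun h => hz ⟨φ.symm z, h, by simp⟩⟩
  have hmid : ∀ u v : E3, u ≠ v → ({u, v} : Finset E3) ∈ L.faces →
      midpoint ℝ u v ∈ convexHull ℝ (({u, v} : Finset E3) : Set E3) ∧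
      midpoint ℝ u v ∈ L.space \ L.vertices := by
    intro u v huv h
    have hm : midpoint ℝ u v ∈ convexHull ℝ (({u, v} : Finset E3) : Set E3) := by
      rw [Finset.coe_pair, convexHull_pair]
      exact midpoint_mem_segment u v
    refine ⟨hm, L.convexHull_subset_space h hm, fun hv => ?_⟩
    have := (SimplicialComplex.vertex_mem_convexHull_iff hv h).1 hm
    simp [midpoint_eq_left_iff, midpoint_eq_right_iff, huv] at this
  set A : Set E3 := convexHull ℝ (({a, b} : Finset E3) : Set E3) with hA
  set B : Set E3 := ⋃ F ∈ {F | F ∈ L.faces ∧ F.card ≤ 2 ∧ F ≠ {a, b}},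
    convexHull ℝ (F : Set E3) with hB
  have hAc : IsClosed A := (Finset.finite_toSet _).isClosed_convexHull ℝ
  have hBc : IsClosed B := by
    refine Set.Finite.isClosed_biUnion (hL.finite.subset fun F hF => hF.1) fun F _ => ?_
    exact F.finite_toSet.isClosed_convexHull ℝ
  rw [isPreconnected_closed_iff] at hpre
  obtain ⟨x, hx, hxA, hxB⟩ := hpre A B hAc hBc (by
      rintro x ⟨hx, -⟩
      obtain ⟨F, hF, hc, hxF⟩ := hcon x hx
      by_cases h : F = {a, b}
      · left; rw [hA, ← h]; exact hxF
      · right; exact Set.mem_biUnion (show F ∈ {F | _} from ⟨hF, hc, h⟩) hxF)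
    ⟨_, (hmid a b hab h1).2, (hmid a b hab h1).1⟩
    ⟨_, (hmid c d hcd h2).2, Set.mem_biUnion
      (show _ ∈ {F | _} from ⟨h2, Finset.card_le_two, hne.symm⟩) (hmid c d hcd h2).1⟩
  obtain ⟨F, ⟨hF, hFc, hFne⟩, hxF⟩ := Set.mem_iUnion₂.1 hxB
  have h3 := L.inter_subset_convexHull h1 hF ⟨hxA, hxF⟩
  rw [← Finset.coe_inter] at h3
  have h4 : (({a, b} : Finset E3) ∩ F).card ≤ 1 := by
    by_contra h
    push Not at h
    have e1 : ({a, b} : Finset E3) ∩ F = {a, b} :=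
      Finset.eq_of_subset_of_card_le Finset.inter_subset_left
        (le_trans Finset.card_le_two (by omega))
    have e2 : ({a, b} : Finset E3) ∩ F = F :=
      Finset.eq_of_subset_of_card_le Finset.inter_subset_right (by omega)
    exact hFne (e2.symm.trans e1)
  rcases Nat.le_one_iff_eq_zero_or_eq_one.1 h4 with h5 | h5
  · rw [Finset.card_eq_zero] at h5
    rw [h5] at h3; simp at h3
  · obtain ⟨y, hy⟩ := Finset.card_eq_one.1 h5
    rw [hy] at h3
    simp only [Finset.coe_singleton, convexHull_singleton, Set.mem_singleton_iff] at h3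
    apply hx.2
    rw [h3]
    exact L.down_closed h1 (by rw [← hy]; exact Finset.inter_subset_left) (by simp)

theorem pl_embed (L : SimplicialComplex ℝ E3) (m : E3 → E3 → ℕ) (hL : IsLabeledS2 L m)
    {a b c d : E3} (hab : a ≠ b) (hcd : c ≠ d) (h1 : ({a, b} : Finset E3) ∈ L.faces)
    (h2 : ({c, d} : Finset E3) ∈ L.faces) (hne : ({a, b} : Finset E3) ≠ {c, d}) :
    ∃ f : E3 → ℂ, ContinuousOn f (plSkel L) ∧ Set.InjOn f (plSkel L) := by
  classical
  obtain ⟨x, hx, hxs⟩ := pl_skel_ne L m hL hab hcd h1 h2 hne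
  obtain ⟨φ⟩ := hL.sphere
  obtain ⟨ψ, hψ, hψi⟩ := pl_plane_chart (φ ⟨x, hx⟩)
  have hsub : plSkel L ⊆ L.space := fun y ⟨F, hF, _, hy⟩ => L.convexHull_subset_space hF hy
  have hav : ∀ y (hy : y ∈ plSkel L), φ ⟨y, hsub hy⟩ ∈ ({φ ⟨x, hx⟩}ᶜ : Set _) := by
    intro y hy h
    have := φ.injective h
    simp only [Subtype.mk.injEq] at this
    exact hxs (this ▸ hy)
  refine ⟨fun y => if h : y ∈ L.space then ψ (φ ⟨y, h⟩) else 0, ?_, ?_⟩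
  · rw [continuousOn_iff_continuous_domRestrict]
    have : (plSkel L).domRestrict (fun y => if h : y ∈ L.space then ψ (φ ⟨y, h⟩) else 0) =
        fun y : plSkel L => ψ (φ ⟨y, hsub y.2⟩) := by
      ext y; simp [hsub y.2]
    rw [this]
    exact hψ.comp_continuous (by fun_prop) fun y => hav _ y.2
  · intro y hy z hz hyz
    simp only [hsub hy, hsub hz, dif_pos] at hyz
    have := φ.injective (hψi (hav y hy) (hav z hz) hyz)
    simpa using this

/-- `u` and `v` are joined by a path in the 1-skeleton with all vertices in `X`. -/
def JoinIn (L : SimplicialComplex ℝ E3) (X : Set E3) (u v : E3) : Prop :=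
  u ∈ X ∧ ({u} : Finset E3) ∈ L.faces ∧ Relation.ReflTransGen
    (fun x y => x ≠ y ∧ ({x, y} : Finset E3) ∈ L.faces ∧ x ∈ X ∧ y ∈ X) u v

theorem JoinIn.mem_right {L : SimplicialComplex ℝ E3} {X : Set E3} {u v : E3}
    (h : JoinIn L X u v) : v ∈ X ∧ ({v} : Finset E3) ∈ L.faces := by
  obtain ⟨h1, h2, h3⟩ := h
  rcases h3.cases_tail with rfl | ⟨w, -, -, hw, -, hv⟩
  · exact ⟨h1, h2⟩
  · exact ⟨hv, L.down_closed hw (by simp) (by simp)⟩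

theorem JoinIn.exists_edge {L : SimplicialComplex ℝ E3} {X : Set E3} {u v : E3}
    (h : JoinIn L X u v) (huv : u ≠ v) : ∃ w, u ≠ w ∧ ({u, w} : Finset E3) ∈ L.faces ∧ w ∈ X := by
  obtain ⟨h1, h2, h3⟩ := h
  rcases h3.cases_head with rfl | ⟨w, ⟨h, h4, -, h5⟩, -⟩
  · exact (huv rfl).elim
  · exact ⟨w, h, h4, h5⟩

theorem JoinIn.exists_path {L : SimplicialComplex ℝ E3} {X : Set E3} {u v : E3}
    (h : JoinIn L X u v) : ∃ γ : Path u v, ∀ t, ∃ F ∈ L.faces, F.card ≤ 2 ∧ (F : Set E3) ⊆ X ∧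
      γ t ∈ convexHull ℝ (F : Set E3) := by
  obtain ⟨h1, h2, h3⟩ := h
  induction h3 with
  | refl => exact ⟨Path.refl u, fun t => ⟨{u}, h2, by simp, by simpa using h1, by simp⟩⟩
  | @tail y z _ hyz ih =>
    obtain ⟨γ, hγ⟩ := ih
    obtain ⟨hne, hf, hy, hz⟩ := hyz
    have hconv : ∀ t : unitInterval, AffineMap.lineMap (k := ℝ) y z (t : ℝ) ∈ segment ℝ y z := by
      intro t
      rw [segment_eq_image_lineMap]
      exact ⟨t, t.2, rfl⟩
    let δ : Path y z := ⟨⟨fun t => AffineMap.lineMap (k := ℝ) y z (t : ℝ), by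
      exact AffineMap.lineMap_continuous.comp continuous_subtype_val⟩, by simp, by simp⟩
    have hδ : ∀ t, ∃ F ∈ L.faces, F.card ≤ 2 ∧ (F : Set E3) ⊆ X ∧
      δ t ∈ convexHull ℝ (F : Set E3) := by
      intro t
      refine ⟨{y, z}, hf, Finset.card_le_two, ?_, ?_⟩
      · intro w hw
        simp only [Finset.coe_pair, Set.mem_insert_iff, Set.mem_singleton_iff] at hw
        rcases hw with rfl | rfl <;> assumption
      · rw [Finset.coe_pair, convexHull_pair]
        exact hconv t
    refine ⟨γ.trans δ, fun t => ?_⟩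
    have : (γ.trans δ) t ∈ Set.range (γ.trans δ) := ⟨t, rfl⟩
    rw [Path.trans_range] at this
    rcases this with ⟨s, hs⟩ | ⟨s, hs⟩
    · rw [← hs]; exact hγ s
    · rw [← hs]; exact hδ s

/-- A family of joins gives a planar drawing. -/
theorem pl_draw (L : SimplicialComplex ℝ E3) (m : E3 → E3 → ℕ) (hL : IsLabeledS2 L m)
    {k : ℕ} (P : Fin k → E3) (hP : Function.Injective P) (hPf : ∀ i, ({P i} : Finset E3) ∈ L.faces)
    (E : Fin k → Fin k → Prop) (X : Fin k → Fin k → Set E3)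
    (hJ : ∀ i j, E i j → JoinIn L (X i j) (P i) (P j))
    (hX : ∀ a b c d, E a b → E c d → a ≠ c → a ≠ d → b ≠ c → b ≠ d →
      Disjoint (X a b) (X c d))
    (p q r s : Fin k) (hpq : E p q) (hrs : E r s) (h1 : p ≠ q) (h2 : p ≠ r) (h3 : p ≠ s)
    (h4 : q ≠ r) (h5 : q ≠ s) (h6 : r ≠ s) :
    ∃ (Q : Fin k → ℂ) (γ : Fin k → Fin k → ℝ → ℂ), Function.Injective Q ∧
      (∀ i j, Continuous (γ i j)) ∧ (∀ i j, E i j → γ i j 0 = Q i) ∧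
      (∀ i j, E i j → γ i j 1 = Q j) ∧
      (∀ a b c d, E a b → E c d → a ≠ c → a ≠ d → b ≠ c → b ≠ d →
        ∀ s t, γ a b s ≠ γ c d t) := by
  classical
  obtain ⟨w, hw1, hw2, hw3⟩ := (hJ p q hpq).exists_edge (hP.ne h1)
  obtain ⟨z, hz1, hz2, hz3⟩ := (hJ r s hrs).exists_edge (hP.ne h6)
  have hdis := hX p q r s hpq hrs h2 h3 h4 h5
  obtain ⟨f, hf, hfi⟩ := pl_embed L m hL hw1 hz1 hw2 hz2 (by
    intro h
    have : P p ∈ ({P r, z} : Finset E3) := by rw [← h]; simp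
    have h7 : P p ∈ X r s := by
      simp only [Finset.mem_insert, Finset.mem_singleton] at this
      rcases this with h8 | h8
      · exact (hP.ne h2 h8).elim
      · rw [h8]; exact hz3
    exact Set.disjoint_left.1 hdis (hJ p q hpq).1 h7)
  have hpath : ∀ i j, ∃ γ : ℝ → E3, Continuous γ ∧ (∀ t, γ t ∈ plSkel L) ∧ (E i j →
      γ 0 = P i ∧ γ 1 = P j ∧ ∀ t, ∃ F ∈ L.faces, F.card ≤ 2 ∧ (F : Set E3) ⊆ X i j ∧
      γ t ∈ convexHull ℝ (F : Set E3)) := by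
    intro i j
    by_cases h : E i j
    · obtain ⟨γ, hγ⟩ := (hJ i j h).exists_path
      have key : ∀ t : ℝ, ∃ F ∈ L.faces, F.card ≤ 2 ∧ (F : Set E3) ⊆ X i j ∧
          γ.extend t ∈ convexHull ℝ (F : Set E3) := by
        intro t
        have : γ.extend t ∈ Set.range γ.extend := ⟨t, rfl⟩
        rw [Path.extend_range] at this
        obtain ⟨s, hs⟩ := this
        rw [← hs]; exact hγ s
      refine ⟨γ.extend, γ.continuous_extend, fun t => ?_, fun _ => ⟨by simp, by simp, key⟩⟩
      obtain ⟨F, h1, h2, h3, h4⟩ := key t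
      exact ⟨F, h1, h2, h4⟩
    · exact ⟨fun _ => P i, continuous_const, fun _ => ⟨{P i}, hPf i, by simp, by simp⟩,
        fun h' => (h h').elim⟩
  choose γ hγc hγs hγ using hpath
  refine ⟨fun i => f (P i), fun i j t => f (γ i j t), ?_, ?_, ?_, ?_, ?_⟩
  · intro i j hij
    exact hP (hfi ⟨{P i}, hPf i, by simp, by simp⟩ ⟨{P j}, hPf j, by simp, by simp⟩ hij)
  · intro i j
    exact hf.comp_continuous (hγc i j) (hγs i j)
  · intro i j h
    simp only [(hγ i j h).1]
  · intro i j h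
    simp only [(hγ i j h).2.1]
  · intro a b c d hab hcd e1 e2 e3 e4 s t hst
    have := hfi (hγs a b s) (hγs c d t) hst
    obtain ⟨F, hF, -, hFX, hFm⟩ := (hγ a b hab).2.2 s
    obtain ⟨F', hF', -, hFX', hFm'⟩ := (hγ c d hcd).2.2 t
    rw [← this] at hFm'
    have h8 := L.inter_subset_convexHull hF hF' ⟨hFm, hFm'⟩
    have h9 : (F ∩ F' : Set E3) = ∅ :=
      Set.disjoint_iff_inter_eq_empty.1 ((hX a b c d hab hcd e1 e2 e3 e4).mono hFX hFX')
    rw [h9] at h8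
    simp at h8

theorem no_K5 (L : SimplicialComplex ℝ E3) (m : E3 → E3 → ℕ) (hL : IsLabeledS2 L m)
    (P : Fin 5 → E3) (hP : Function.Injective P) (X : Fin 5 → Fin 5 → Set E3)
    (hJ : ∀ i j, i < j → JoinIn L (X i j) (P i) (P j))
    (hX : ∀ a b c d, a < b → c < d → a ≠ c → a ≠ d → b ≠ c → b ≠ d →
      Disjoint (X a b) (X c d)) : False := by
  have hPf : ∀ i, ({P i} : Finset E3) ∈ L.faces := by
    intro i
    rcases Fin.eq_zero_or_eq_succ i with rfl | ⟨j, rfl⟩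
    · exact (hJ 0 1 (by decide)).2.1
    · exact ((hJ 0 j.succ (Fin.succ_pos j)).mem_right).2
  obtain ⟨Q, γ, h1, h2, h3, h4, h5⟩ := pl_draw L m hL P hP hPf (fun i j => i < j) X hJ hX
    0 1 2 3 (by decide) (by decide) (by decide) (by decide) (by decide) (by decide) (by decide)
    (by decide)
  exact pl_K5 Q h1 γ h2 h3 h4 h5

theorem no_K33 (L : SimplicialComplex ℝ E3) (m : E3 → E3 → ℕ) (hL : IsLabeledS2 L m)
    (P : Fin 6 → E3) (hP : Function.Injective P) (X : Fin 6 → Fin 6 → Set E3)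
    (hJ : ∀ i j, i < 3 → 3 ≤ j → JoinIn L (X i j) (P i) (P j))
    (hX : ∀ a b c d, a < 3 → 3 ≤ b → c < 3 → 3 ≤ d → a ≠ c → b ≠ d →
      Disjoint (X a b) (X c d)) : False := by
  have hPf : ∀ i, ({P i} : Finset E3) ∈ L.faces := by
    intro i
    rcases lt_or_ge i 3 with h | h
    · exact (hJ i 3 h le_rfl).2.1
    · exact ((hJ 0 i (by decide) h).mem_right).2
  obtain ⟨Q, γ, h1, h2, h3, h4, h5⟩ := pl_draw L m hL P hP hPf (fun i j => i < 3 ∧ 3 ≤ j) X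
    (fun i j h => hJ i j h.1 h.2)
    (fun a b c d h h' e _ _ e' => hX a b c d h.1 h.2 h'.1 h'.2 e e')
    0 3 1 4 (by decide) (by decide) (by decide) (by decide) (by decide) (by decide) (by decide)
    (by decide)
  exact pl_K33 Q h1 γ h2 (fun i j h h' => h3 i j ⟨h, h'⟩) (fun i j h h' => h4 i j ⟨h, h'⟩)
    (fun a b c d e1 e2 e3 e4 e5 e6 => h5 a b c d ⟨e1, e2⟩ ⟨e3, e4⟩ e5 (by omega) (by omega) e6)

/-! ### Combinatorics of the 1-skeleton -/

section Comb

variable {L : SimplicialComplex ℝ E3} {m : E3 → E3 → ℕ}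

/-- Adjacency in the 1-skeleton. -/
def Adj (L : SimplicialComplex ℝ E3) (u v : E3) : Prop := u ≠ v ∧ ({u, v} : Finset E3) ∈ L.faces

theorem Adj.symm {u v : E3} (h : Adj L u v) : Adj L v u :=
  ⟨h.1.symm, by rw [Finset.pair_comm]; exact h.2⟩

theorem Adj.vl {u v : E3} (h : Adj L u v) : ({u} : Finset E3) ∈ L.faces :=
  L.down_closed h.2 (by simp) (by simp)

theorem Adj.vr {u v : E3} (h : Adj L u v) : ({v} : Finset E3) ∈ L.faces := h.symm.vl

theorem adj_of_mem {F : Finset E3} (hF : F ∈ L.faces) {u v : E3} (hu : u ∈ F) (hv : v ∈ F)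
    (h : u ≠ v) : Adj L u v :=
  ⟨h, L.down_closed hF (by intro x hx; simp at hx; rcases hx with rfl | rfl <;> assumption)
    (by simp)⟩

theorem joinIn_pair {u v : E3} (h : Adj L u v) : JoinIn L {u, v} u v :=
  ⟨by simp, h.vl, Relation.ReflTransGen.single ⟨h.1, h.2, by simp, by simp⟩⟩

theorem joinIn_mid {u w v : E3} (h : Adj L u w) (h' : Adj L w v) : JoinIn L {u, w, v} u v :=
  ⟨by simp, h.vl, (Relation.ReflTransGen.single ⟨h.1, h.2, by simp, by simp⟩).tail
    ⟨h'.1, h'.2, by simp, by simp⟩⟩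

theorem planar33 (hL : IsLabeledS2 L m) {t t' z' v v' z : E3} {X : Set E3}
    (h1 : Adj L t v) (h2 : Adj L t v') (h3 : Adj L t z)
    (h4 : Adj L t' v) (h5 : Adj L t' v') (h6 : Adj L t' z)
    (h7 : Adj L z' v) (h8 : Adj L z' v') (hJ : JoinIn L X z' z)
    (ht : t ≠ t') (hv : v ≠ v') (hz : z ≠ z')
    (x1 : t ∉ X) (x2 : t' ∉ X) (x3 : v ∉ X) (x4 : v' ∉ X) : False := by
  have y1 := hJ.1
  have y2 := hJ.mem_right.1
  have n1 : t ≠ z' := fun h => x1 (h ▸ y1)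
  have n2 : t' ≠ z' := fun h => x2 (h ▸ y1)
  have n3 : v ≠ z := fun h => x3 (h ▸ y2)
  have n4 : v' ≠ z := fun h => x4 (h ▸ y2)
  have hP : Function.Injective ![t, t', z', v, v', z] := by
    have := h1.1; have := h2.1; have := h3.1; have := h4.1; have := h5.1; have := h6.1
    have := h7.1; have := h8.1
    intro i j hij
    fin_cases i <;> fin_cases j <;> simp at hij ⊢ <;> grind
  refine no_K33 L m hL ![t, t', z', v, v', z] hP
    (fun i j => if i = 2 ∧ j = 5 then X else {![t, t', z', v, v', z] i, ![t, t', z', v, v', z] j})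
    ?_ ?_
  · intro i j hi hj
    by_cases h : i = 2 ∧ j = 5
    · obtain ⟨rfl, rfl⟩ := h
      simpa using hJ
    · simp only [h, if_false]
      apply joinIn_pair
      fin_cases i <;> simp at hi <;> fin_cases j <;> simp at hj <;> simp at h ⊢ <;> assumption
  · intro a b c d ha hb hc hd hac hbd
    rw [Set.disjoint_left]
    intro x hx hx'
    by_cases h : a = 2 ∧ b = 5
    · have h' : ¬ (c = 2 ∧ d = 5) := fun h' => hac (h.1.trans h'.1.symm)
      simp only [h, and_self, if_true] at hx
      simp only [h', if_false] at hx'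
      obtain ⟨rfl, rfl⟩ := h
      fin_cases c <;> simp at hc hac <;> fin_cases d <;> simp at hd hbd <;> simp at hx' <;> grind
    · by_cases h' : c = 2 ∧ d = 5
      · simp only [h', and_self, if_true] at hx'
        simp only [h, if_false] at hx
        obtain ⟨rfl, rfl⟩ := h'
        fin_cases a <;> simp at ha hac <;> fin_cases b <;> simp at hb hbd <;> simp at hx <;> grind
      · simp only [h, if_false] at hx
        simp only [h', if_false] at hx'
        have had : a ≠ d := by omega
        have hbc : b ≠ c := by omega
        simp only [Set.mem_insert_iff, Set.mem_singleton_iff] at hx hx'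
        rcases hx with rfl | rfl <;> rcases hx' with h | h
        · exact hac (hP h)
        · exact had (hP h)
        · exact hbc (hP h)
        · exact hbd (hP h)

theorem planar5 (hL : IsLabeledS2 L m) {a c b d x : E3} {X Y : Set E3}
    (hX : JoinIn L X a c) (hY : JoinIn L Y b d)
    (h1 : Adj L a b) (h2 : Adj L c b) (h3 : Adj L c d) (h4 : Adj L a d)
    (h5 : Adj L a x) (h6 : Adj L b x) (h7 : Adj L c x) (h8 : Adj L d x)
    (hac : a ≠ c) (hbd : b ≠ d) (hXY : Disjoint X Y)
    (x1 : b ∉ X) (x2 : d ∉ X) (x3 : x ∉ X) (y1 : a ∉ Y) (y2 : c ∉ Y) (y3 : x ∉ Y) : False := by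
  have hP : Function.Injective ![a, c, b, d, x] := by
    have := h1.1; have := h2.1; have := h3.1; have := h4.1; have := h5.1; have := h6.1
    have := h7.1; have := h8.1
    intro i j hij
    fin_cases i <;> fin_cases j <;> simp at hij ⊢ <;> grind
  refine no_K5 L m hL ![a, c, b, d, x] hP
    (fun i j => if i = 0 ∧ j = 1 then X else if i = 2 ∧ j = 3 then Y else
      {![a, c, b, d, x] i, ![a, c, b, d, x] j}) ?_ ?_
  · intro i j hij
    by_cases h : i = 0 ∧ j = 1
    · obtain ⟨rfl, rfl⟩ := h
      simpa using hX
    · by_cases h' : i = 2 ∧ j = 3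
      · obtain ⟨rfl, rfl⟩ := h'
        simpa using hY
      · simp only [h, h', if_false]
        apply joinIn_pair
        fin_cases i <;> fin_cases j <;> simp at hij <;> simp at h h' ⊢ <;> assumption
  · intro i j k l hij hkl hik hil hjk hjl
    rw [Set.disjoint_left] at hXY ⊢
    intro y hy hy'
    by_cases g1 : i = 0 ∧ j = 1
    · have g1' : ¬ (k = 0 ∧ l = 1) := fun h => hik (g1.1.trans h.1.symm)
      simp only [g1, and_self, if_true] at hy
      simp only [g1', if_false] at hy'
      obtain ⟨rfl, rfl⟩ := g1
      by_cases g2 : k = 2 ∧ l = 3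
      · simp only [g2, and_self, if_true] at hy'
        exact hXY hy hy'
      · simp only [g2, if_false] at hy'
        fin_cases k <;> simp at hik hjk <;> fin_cases l <;> simp at hil hjl hkl <;>
          simp at hy' <;> grind
    · simp only [g1, if_false] at hy
      by_cases g2 : i = 2 ∧ j = 3
      · simp only [g2, and_self, if_true] at hy
        have g2' : ¬ (k = 2 ∧ l = 3) := fun h => hik (g2.1.trans h.1.symm)
        simp only [g2', if_false] at hy'
        obtain ⟨rfl, rfl⟩ := g2
        by_cases g3 : k = 0 ∧ l = 1
        · simp only [g3, and_self, if_true] at hy'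
          exact hXY hy' hy
        · simp only [g3, if_false] at hy'
          fin_cases k <;> simp at hik hjk <;> fin_cases l <;> simp at hil hjl hkl <;>
            simp at hy' <;> grind
      · simp only [g2, if_false] at hy
        by_cases g3 : k = 0 ∧ l = 1
        · simp only [g3, and_self, if_true] at hy'
          obtain ⟨rfl, rfl⟩ := g3
          fin_cases i <;> simp at hik hil <;> fin_cases j <;> simp at hjk hjl hij <;>
            simp at hy <;> grind
        · simp only [g3, if_false] at hy'
          by_cases g4 : k = 2 ∧ l = 3
          · simp only [g4, and_self, if_true] at hy'
            obtain ⟨rfl, rfl⟩ := g4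
            fin_cases i <;> simp at hik hil <;> fin_cases j <;> simp at hjk hjl hij <;>
              simp at hy <;> grind
          · simp only [g4, if_false] at hy'
            simp only [Set.mem_insert_iff, Set.mem_singleton_iff] at hy hy'
            rcases hy with rfl | rfl <;> rcases hy' with h | h
            · exact hik (hP h)
            · exact hil (hP h)
            · exact hjk (hP h)
            · exact hjl (hP h)

/-- Adjacency with label two. -/
def Ra (L : SimplicialComplex ℝ E3) (m : E3 → E3 → ℕ) (u v : E3) : Prop := Adj L u v ∧ m u v = 2

theorem Ra.symm (hL : IsLabeledS2 L m) {u v : E3} (h : Ra L m u v) : Ra L m v u :=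
  ⟨h.1.symm, by rw [hL.symm]; exact h.2⟩

/-- Common label-two neighbours. -/
def Nb (L : SimplicialComplex ℝ E3) (m : E3 → E3 → ℕ) (a c : E3) : Set E3 :=
  {x | Ra L m a x ∧ Ra L m c x}

/-- Vertices of the suspension with suspension points `a`, `c`. -/
def Vs (L : SimplicialComplex ℝ E3) (m : E3 → E3 → ℕ) (a c : E3) : Set E3 :=
  {x | x = a ∨ x = c ∨ x ∈ Nb L m a c}

/-- The full subcomplex on `W`. -/
def Fs (L : SimplicialComplex ℝ E3) (W : Set E3) : Set (Finset E3) :=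
  {F | F ∈ L.faces ∧ ∀ x ∈ F, x ∈ W}

theorem nb_comm (a c : E3) : Nb L m a c = Nb L m c a := by
  ext x; exact and_comm

theorem vs_comm (a c : E3) : Vs L m a c = Vs L m c a := by
  ext x; simp only [Vs, Set.mem_ofPred_eq, nb_comm a c]; tauto

theorem fs_single {W : Set E3} {x : E3} : ({x} : Finset E3) ∈ Fs L W ↔
    ({x} : Finset E3) ∈ L.faces ∧ x ∈ W := by simp [Fs]

theorem flag2 (hL : IsLabeledS2 L m) (hf : MetricFlag L m) {t x y : E3} (hx : Ra L m t x)
    (hy : Ra L m t y) (hxy : Adj L x y) : ({t, x, y} : Finset E3) ∈ L.faces := by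
  rw [hf t x y hx.1.1 hxy.1 hy.1.1 hx.1.2 hxy.2 hy.1.2, hx.2, hL.symm y t, hy.2]
  have := hL.two_le x y hxy.1 hxy.2
  have : (0 : ℝ) < 1 / (m x y : ℝ) := by
    apply one_div_pos.2
    exact_mod_cast (by omega : 0 < m x y)
  push_cast
  linarith

/-- A Euclidean 4-circuit, combinatorially. -/
structure Circ (L : SimplicialComplex ℝ E3) (m : E3 → E3 → ℕ) (a b c d : E3) : Prop where
  ab : Ra L m a b
  bc : Ra L m b c
  cd : Ra L m c d
  da : Ra L m d a
  ac : a ≠ c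
  bd : b ≠ d
  nac : ¬ Adj L a c
  nbd : ¬ Adj L b d

theorem Circ.rot {a b c d : E3} (h : Circ L m a b c d) : Circ L m b c d a :=
  ⟨h.bc, h.cd, h.da, h.ab, h.bd, h.ac.symm, h.nbd, fun h' => h.nac h'.symm⟩

theorem Circ.refl (hL : IsLabeledS2 L m) {a b c d : E3} (h : Circ L m a b c d) :
    Circ L m c b a d :=
  ⟨h.bc.symm hL, h.ab.symm hL, h.da.symm hL, h.cd.symm hL, h.ac.symm, h.bd,
    fun h' => h.nac h'.symm, h.nbd⟩

theorem Circ.nb (hL : IsLabeledS2 L m) {a b c d : E3} (h : Circ L m a b c d) :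
    b ∈ Nb L m a c ∧ d ∈ Nb L m a c :=
  ⟨⟨h.ab, h.bc.symm hL⟩, ⟨h.da.symm hL, h.cd⟩⟩

theorem Circ.of_nb (hL : IsLabeledS2 L m) {a b c d : E3} (hb : b ∈ Nb L m a c)
    (hd : d ∈ Nb L m a c) (h1 : a ≠ c) (h2 : ¬ Adj L a c) (h3 : b ≠ d) (h4 : ¬ Adj L b d) :
    Circ L m a b c d :=
  ⟨hb.1, hb.2.symm hL, hd.2, hd.1.symm hL, h1, h3, h2, h4⟩

theorem circ_of (hL : IsLabeledS2 L m) (hf : MetricFlag L m) {v : Fin 4 → E3}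
    (h : IsEuclidean4Circuit L m v) : Circ L m (v 0) (v 1) (v 2) (v 3) := by
  obtain ⟨hi, he, hm, hn⟩ := h
  have r : ∀ i : Fin 4, Ra L m (v i) (v (i + 1)) := fun i =>
    ⟨⟨hi.ne (by fin_cases i <;> decide), he i⟩, hm i⟩
  have r0 : Ra L m (v 0) (v 1) := r 0
  have r1 : Ra L m (v 1) (v 2) := r 1
  have r2 : Ra L m (v 2) (v 3) := r 2
  have r3 : Ra L m (v 3) (v 0) := r 3
  refine ⟨r0, r1, r2, r3, hi.ne (by decide), hi.ne (by decide), fun h => hn (Or.inl ⟨?_, ?_⟩),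
    fun h => hn (Or.inr ⟨?_, ?_⟩)⟩
  · have := flag2 hL hf (r0.symm hL) r1 h
    rwa [Finset.insert_comm] at this
  · have := flag2 hL hf r3 (r2.symm hL) h
    rw [Finset.insert_comm, Finset.pair_comm (v 3)] at this
    exact this
  · have := flag2 hL hf (r1.symm hL) r2 h
    rwa [Finset.insert_comm] at this
  · exact flag2 hL hf r0 (r3.symm hL) h

theorem fin_eq {a b c d : E3} {F G : Finset E3} (hx : ∀ x ∈ F, x = a ∨ x = b ∨ x = c ∨ x = d)
    (h : (a ∈ F → a ∈ G) ∧ (b ∈ F → b ∈ G) ∧ (c ∈ F → c ∈ G) ∧ (d ∈ F → d ∈ G))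
    (h' : ∀ x ∈ G, x ∈ F) : F = G := by
  ext x
  refine ⟨fun hxF => ?_, h' x⟩
  obtain ⟨h1, h2, h3, h4⟩ := h
  rcases hx x hxF with rfl | rfl | rfl | rfl
  · exact h1 hxF
  · exact h2 hxF
  · exact h3 hxF
  · exact h4 hxF

theorem Circ.fs {a b c d : E3} (h : Circ L m a b c d) :
    Fs L {a, b, c, d} = circuitComplex ![a, b, c, d] := by
  ext F
  constructor
  · rintro ⟨hF, hx⟩
    have key : ∀ x ∈ F, ∀ y ∈ F, x = y ∨ Adj L x y := fun x hx y hy => by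
      by_cases e : x = y
      · exact Or.inl e
      · exact Or.inr (adj_of_mem hF hx hy e)
    have n1 : ¬ (a ∈ F ∧ c ∈ F) := fun g => (key a g.1 c g.2).elim h.ac h.nac
    have n2 : ¬ (b ∈ F ∧ d ∈ F) := fun g => (key b g.1 d g.2).elim h.bd h.nbd
    have hne := SimplicialComplex.nonempty_of_mem_faces hF
    simp only [Set.mem_insert_iff, Set.mem_singleton_iff] at hx
    have e1 := h.ab.1.1
    have e2 := h.bc.1.1
    have e3 := h.cd.1.1
    have e4 := h.da.1.1
    have e5 := h.ac
    have e6 := h.bd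
    by_cases ha : a ∈ F <;> by_cases hb : b ∈ F <;> by_cases hc : c ∈ F <;> by_cases hd : d ∈ F <;>
      simp only [ha, hb, hc, hd, true_and, and_true, not_true_eq_false, not_false_eq_true,
        and_self] at n1 n2
    · refine Or.inr ⟨0, (?_ : F = ({a, b} : Finset E3))⟩
      exact fin_eq hx (by simp [ha, hb, hc, hd]) (by simp [ha, hb, hc, hd])
    · refine Or.inr ⟨3, (?_ : F = ({d, a} : Finset E3))⟩
      exact fin_eq hx (by simp [ha, hb, hc, hd]) (by simp [ha, hb, hc, hd])
    · refine Or.inl ⟨0, (?_ : F = ({a} : Finset E3))⟩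
      exact fin_eq hx (by simp [ha, hb, hc, hd]) (by simp [ha, hb, hc, hd])
    · refine Or.inr ⟨1, (?_ : F = ({b, c} : Finset E3))⟩
      exact fin_eq hx (by simp [ha, hb, hc, hd]) (by simp [ha, hb, hc, hd])
    · refine Or.inl ⟨1, (?_ : F = ({b} : Finset E3))⟩
      exact fin_eq hx (by simp [ha, hb, hc, hd]) (by simp [ha, hb, hc, hd])
    · refine Or.inr ⟨2, (?_ : F = ({c, d} : Finset E3))⟩
      exact fin_eq hx (by simp [ha, hb, hc, hd]) (by simp [ha, hb, hc, hd])
    · refine Or.inl ⟨2, (?_ : F = ({c} : Finset E3))⟩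
      exact fin_eq hx (by simp [ha, hb, hc, hd]) (by simp [ha, hb, hc, hd])
    · refine Or.inl ⟨3, (?_ : F = ({d} : Finset E3))⟩
      exact fin_eq hx (by simp [ha, hb, hc, hd]) (by simp [ha, hb, hc, hd])
    · exfalso
      obtain ⟨x, hxF⟩ := hne
      grind
  · rintro (⟨i, rfl⟩ | ⟨i, rfl⟩)
    · fin_cases i
      · exact ⟨h.ab.1.vl, by simp⟩
      · exact ⟨h.bc.1.vl, by simp⟩
      · exact ⟨h.cd.1.vl, by simp⟩
      · exact ⟨h.da.1.vl, by simp⟩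
    · fin_cases i
      · exact ⟨h.ab.1.2, by simp⟩
      · exact ⟨h.bc.1.2, by simp⟩
      · exact ⟨h.cd.1.2, by simp⟩
      · exact ⟨h.da.1.2, by simp⟩

theorem Circ.toEuclid {a b c d : E3} (h : Circ L m a b c d) :
    IsEuclidean4Circuit L m ![a, b, c, d] := by
  have e1 := h.ab.1.1
  have e2 := h.bc.1.1
  have e3 := h.cd.1.1
  have e4 := h.da.1.1
  have e5 := h.ac
  have e6 := h.bd
  refine ⟨?_, ?_, ?_, ?_⟩
  · intro i j hij
    fin_cases i <;> fin_cases j <;> simp at hij ⊢ <;> grind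
  · intro i
    fin_cases i
    · exact h.ab.1.2
    · exact h.bc.1.2
    · exact h.cd.1.2
    · exact h.da.1.2
  · intro i
    fin_cases i
    · exact h.ab.2
    · exact h.bc.2
    · exact h.cd.2
    · exact h.da.2
  · rintro (⟨g, -⟩ | ⟨g, -⟩)
    · exact h.nac (adj_of_mem g (by simp) (by simp) h.ac)
    · exact h.nbd (adj_of_mem g (by simp) (by simp) h.bd)

end Comb

section Susp

variable {L : SimplicialComplex ℝ E3} {m : E3 → E3 → ℕ}

theorem ins_face (hL : IsLabeledS2 L m) (hf : MetricFlag L m) {t : E3} {F : Finset E3}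
    (hF : F ∈ L.faces) (hc : F.card ≤ 2) (h : ∀ x ∈ F, Ra L m t x) : insert t F ∈ L.faces := by
  have hne := SimplicialComplex.nonempty_of_mem_faces hF
  have : F.card = 1 ∨ F.card = 2 := by
    have := hne.card_pos
    omega
  rcases this with h1 | h1
  · obtain ⟨x, rfl⟩ := Finset.card_eq_one.1 h1
    exact (h x (by simp)).1.2
  · obtain ⟨x, y, hxy, rfl⟩ := Finset.card_eq_two.1 h1
    exact flag2 hL hf (h x (by simp)) (h y (by simp)) ⟨hxy, hF⟩

theorem data_nb {S Z : Set (Finset E3)} {t t' : E3} (h : IsRASuspData L m S Z t t') {v : E3}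
    (hv : ({v} : Finset E3) ∈ Z) : v ∈ Nb L m t t' := by
  have h1 : insert t ({v} : Finset E3) ∈ L.faces := h.subset (by
    rw [h.eq]; exact Or.inl (Or.inr ⟨_, hv, rfl⟩))
  have h2 : insert t' ({v} : Finset E3) ∈ L.faces := h.subset (by
    rw [h.eq]; exact Or.inr ⟨_, hv, rfl⟩)
  have n1 := h.t_notin _ hv
  have n2 := h.t'_notin _ hv
  simp only [Finset.mem_singleton] at n1 n2
  exact ⟨⟨⟨n1, h1⟩, (h.labels v hv).1⟩, ⟨⟨n2, h2⟩, (h.labels v hv).2⟩⟩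

theorem data_nb' {S Z : Set (Finset E3)} {t t' : E3} (h : IsRASuspData L m S Z t t')
    {F : Finset E3} (hF : F ∈ Z) {v : E3} (hv : v ∈ F) : v ∈ Nb L m t t' :=
  data_nb h (h.zdown F hF _ (by simpa using hv) (by simp))

theorem data_vs {S Z : Set (Finset E3)} {t t' : E3} (h : IsRASuspData L m S Z t t')
    {F : Finset E3} (hF : F ∈ S) {v : E3} (hv : v ∈ F) : v ∈ Vs L m t t' := by
  rw [h.eq] at hF
  rcases hF with ((hF | hF) | ⟨G, hG, rfl⟩) | ⟨G, hG, rfl⟩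
  · exact Or.inr (Or.inr (data_nb' h hF hv))
  · rcases hF with rfl | rfl
    · exact Or.inl (by simpa using hv)
    · exact Or.inr (Or.inl (by simpa using hv))
  · rcases Finset.mem_insert.1 hv with rfl | hv
    · exact Or.inl rfl
    · exact Or.inr (Or.inr (data_nb' h hG hv))
  · rcases Finset.mem_insert.1 hv with rfl | hv
    · exact Or.inr (Or.inl rfl)
    · exact Or.inr (Or.inr (data_nb' h hG hv))

theorem data_swap {S Z : Set (Finset E3)} {t t' : E3} (h : IsRASuspData L m S Z t t') :
    IsRASuspData L m S Z t' t where
  subset := h.subset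
  zsubset := h.zsubset
  zdown := h.zdown
  znonempty := h.znonempty
  tne := h.tne.symm
  t_notin := h.t'_notin
  t'_notin := h.t_notin
  labels := fun v hv => (h.labels v hv).symm
  eq := by
    rw [h.eq]
    unfold joinSusp
    rw [Set.union_right_comm, Set.pair_comm]

theorem mkdata {Z : Set (Finset E3)} {t t' : E3} (hZ : Z ⊆ L.faces)
    (hd : ∀ F ∈ Z, ∀ G : Finset E3, G ⊆ F → G.Nonempty → G ∈ Z) (hne : Z.Nonempty) (ht : t ≠ t')
    (hn : ∀ F ∈ Z, ∀ x ∈ F, x ∈ Nb L m t t')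
    (hi : ∀ F ∈ Z, insert t F ∈ L.faces ∧ insert t' F ∈ L.faces) :
    IsRASuspData L m (joinSusp Z t t') Z t t' where
  subset := by
    obtain ⟨G, hG⟩ := hne
    rintro F (((hF | hF) | ⟨G, hG, rfl⟩) | ⟨G, hG, rfl⟩)
    · exact hZ hF
    · rcases hF with rfl | rfl
      · exact L.down_closed (hi G hG).1 (by simp) (by simp)
      · exact L.down_closed (hi G hG).2 (by simp) (by simp)
    · exact (hi G hG).1
    · exact (hi G hG).2
  zsubset := hZ
  zdown := hd
  znonempty := hne
  tne := ht
  t_notin := fun F hF h => (hn F hF t h).1.1.1 rfl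
  t'_notin := fun F hF h => (hn F hF t' h).2.1.1 rfl
  labels := fun v hv => ⟨(hn _ hv v (by simp)).1.2, (hn _ hv v (by simp)).2.2⟩
  eq := rfl

theorem maxV (hL : IsLabeledS2 L m) (hf : MetricFlag L m) {S Z : Set (Finset E3)} {t t' : E3}
    (h : IsRASuspData L m S Z t t') (hmax : ∀ T', IsRASusp L m T' → S ⊆ T' → S = T') (v : E3) :
    ({v} : Finset E3) ∈ Z ↔ v ∈ Nb L m t t' := by
  refine ⟨data_nb h, fun hv => ?_⟩
  set Z' : Set (Finset E3) := Z ∪ {F | F ∈ L.faces ∧ F.card ≤ 2 ∧ ∀ x ∈ F, x ∈ Nb L m t t'} with hZ'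
  have d : IsRASuspData L m (joinSusp Z' t t') Z' t t' := by
    refine mkdata ?_ ?_ ?_ h.tne ?_ ?_
    · rintro F (hF | hF)
      · exact h.zsubset hF
      · exact hF.1
    · rintro F (hF | hF) G hG hGn
      · exact Or.inl (h.zdown F hF G hG hGn)
      · exact Or.inr ⟨L.down_closed hF.1 hG hGn, (Finset.card_le_card hG).trans hF.2.1,
          fun x hx => hF.2.2 x (hG hx)⟩
    · exact h.znonempty.mono Set.subset_union_left
    · rintro F (hF | hF) x hx
      · exact data_nb' h hF hx
      · exact hF.2.2 x hx
    · rintro F (hF | hF)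
      · constructor
        · exact h.subset (by rw [h.eq]; exact Or.inl (Or.inr ⟨_, hF, rfl⟩))
        · exact h.subset (by rw [h.eq]; exact Or.inr ⟨_, hF, rfl⟩)
      · exact ⟨ins_face hL hf hF.1 hF.2.1 fun x hx => (hF.2.2 x hx).1,
          ins_face hL hf hF.1 hF.2.1 fun x hx => (hF.2.2 x hx).2⟩
  have hs : S = joinSusp Z' t t' := by
    refine hmax _ ⟨_, _, _, d⟩ ?_
    rw [h.eq]
    unfold joinSusp
    have : Z ⊆ Z' := Set.subset_union_left
    exact Set.union_subset_union (Set.union_subset_union (Set.union_subset_union this subset_rfl)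
      (Set.image_mono this)) (Set.image_mono this)
  have hvZ : ({v} : Finset E3) ∈ Z' := Or.inr ⟨hv.1.1.vr, by simp, by simpa using hv⟩
  have hvS : ({v} : Finset E3) ∈ S := by rw [hs]; exact Or.inl (Or.inl (Or.inl hvZ))
  rw [h.eq] at hvS
  have n1 := hv.1.1.1
  have n2 := hv.2.1.1
  rcases hvS with ((hF | hF) | ⟨G, hG, hG'⟩) | ⟨G, hG, hG'⟩
  · exact hF
  · simp only [Set.mem_insert_iff, Set.mem_singleton_iff, Finset.singleton_inj] at hF
    rcases hF with rfl | rfl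
    · exact absurd rfl n1
    · exact absurd rfl n2
  · have : t ∈ ({v} : Finset E3) := by rw [← hG']; simp
    exact absurd (by simpa using this) n1
  · have : t' ∈ ({v} : Finset E3) := by rw [← hG']; simp
    exact absurd (by simpa using this) n2

theorem join_fs {a c : E3} (hac : a ≠ c) (hn : ¬ Adj L a c) (hva : ({a} : Finset E3) ∈ L.faces)
    (hvc : ({c} : Finset E3) ∈ L.faces)
    (hi : ∀ F ∈ Fs L (Nb L m a c), insert a F ∈ L.faces ∧ insert c F ∈ L.faces) :
    joinSusp (Fs L (Nb L m a c)) a c = Fs L (Vs L m a c) := by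
  ext F
  constructor
  · rintro (((hF | hF) | ⟨G, hG, rfl⟩) | ⟨G, hG, rfl⟩)
    · exact ⟨hF.1, fun x hx => Or.inr (Or.inr (hF.2 x hx))⟩
    · rcases hF with rfl | rfl
      · exact ⟨hva, by simp [Vs]⟩
      · exact ⟨hvc, by simp [Vs]⟩
    · refine ⟨(hi G hG).1, fun x hx => ?_⟩
      rcases Finset.mem_insert.1 hx with rfl | hx
      · exact Or.inl rfl
      · exact Or.inr (Or.inr (hG.2 x hx))
    · refine ⟨(hi G hG).2, fun x hx => ?_⟩
      rcases Finset.mem_insert.1 hx with rfl | hx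
      · exact Or.inr (Or.inl rfl)
      · exact Or.inr (Or.inr (hG.2 x hx))
  · rintro ⟨hF, hx⟩
    by_cases h1 : a ∈ F
    · have h2 : c ∉ F := fun h2 => hn (adj_of_mem hF h1 h2 hac)
      rcases (F.erase a).eq_empty_or_nonempty with he | he
      · left; left; right; left
        rw [← Finset.insert_erase h1, he]; rfl
      · left; right
        refine ⟨F.erase a, ⟨L.down_closed hF (Finset.erase_subset _ _) he, fun x hxe => ?_⟩,
          Finset.insert_erase h1⟩
        rw [Finset.mem_erase] at hxe
        rcases hx x hxe.2 with h | h | h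
        · exact absurd h hxe.1
        · exact absurd (h ▸ hxe.2) h2
        · exact h
    · by_cases h2 : c ∈ F
      · rcases (F.erase c).eq_empty_or_nonempty with he | he
        · left; left; right; right
          rw [← Finset.insert_erase h2, he]; rfl
        · right
          refine ⟨F.erase c, ⟨L.down_closed hF (Finset.erase_subset _ _) he, fun x hxe => ?_⟩,
            Finset.insert_erase h2⟩
          rw [Finset.mem_erase] at hxe
          rcases hx x hxe.2 with h | h | h
          · exact absurd (h ▸ hxe.2) h1
          · exact absurd h hxe.1
          · exact h
      · left; left; left
        refine ⟨hF, fun x hxe => ?_⟩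
        rcases hx x hxe with h | h | h
        · exact absurd (h ▸ hxe) h1
        · exact absurd (h ▸ hxe) h2
        · exact h

theorem susp_form {S Z : Set (Finset E3)} {t t' : E3} (h : IsRASuspData L m S Z t t')
    (hfull : IsFullSubcomplex L Z) (hv : ∀ v, ({v} : Finset E3) ∈ Z ↔ v ∈ Nb L m t t')
    (hn : ¬ Adj L t t') : S = Fs L (Vs L m t t') := by
  have hZ : Z = Fs L (Nb L m t t') := by
    ext F
    constructor
    · exact fun hF => ⟨h.zsubset hF, fun x hx => data_nb' h hF hx⟩
    · exact fun hF => hfull.2 F hF.1 fun v hvF => (hv v).2 (hF.2 v hvF)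
  rw [← join_fs h.tne hn, ← hZ, h.eq]
  · exact h.subset (by rw [h.eq]; simp [joinSusp])
  · exact h.subset (by rw [h.eq]; simp [joinSusp])
  · rw [← hZ]
    intro F hF
    constructor
    · exact h.subset (by rw [h.eq]; exact Or.inl (Or.inr ⟨_, hF, rfl⟩))
    · exact h.subset (by rw [h.eq]; exact Or.inr ⟨_, hF, rfl⟩)

theorem oct (hL : IsLabeledS2 L m) {t t' a b c d e : E3} (h1 : Adj L t a) (h2 : Adj L t b)
    (h3 : Adj L t c) (h4 : Adj L t d) (g1 : Adj L t' a) (g2 : Adj L t' b)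
    (g3 : Adj L t' c) (g4 : Adj L t' d) (k1 : Adj L a b) (k2 : Adj L b c) (k3 : Adj L c d)
    (k4 : Adj L d a) (ht : t ≠ t') (hac : a ≠ c) (hbd : b ≠ d) (e1 : Adj L t e)
    (e2 : Adj L t' e) : e = a ∨ e = b ∨ e = c ∨ e = d := by
  by_contra hcon
  push Not at hcon
  obtain ⟨c1, c2, c3, c4⟩ := hcon
  refine planar5 hL (joinIn_mid e1 e2.symm) (joinIn_mid k4.symm k3.symm) h1 g1 g3 h3 h2 k1 g2
    k2.symm ht hac ?_ ?_ ?_ ?_ ?_ ?_ ?_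
  · rw [Set.disjoint_left]
    intro x hx hx'
    simp only [Set.mem_insert_iff, Set.mem_singleton_iff] at hx hx'
    rcases hx with rfl | rfl | rfl <;> rcases hx' with rfl | rfl | rfl
    · exact h1.1 rfl
    · exact h4.1 rfl
    · exact h3.1 rfl
    · exact c1 rfl
    · exact c4 rfl
    · exact c3 rfl
    · exact g1.1 rfl
    · exact g4.1 rfl
    · exact g3.1 rfl
  · simp [h1.1.symm, g1.1.symm, c1.symm]
  · simp [h3.1.symm, g3.1.symm, c3.symm]
  · simp [h2.1.symm, g2.1.symm, c2.symm]
  · simp [h1.1, h3.1, h4.1]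
  · simp [g1.1, g3.1, g4.1]
  · simp [k1.1.symm, k2.1, hbd]

theorem circ_in_aux {S Z : Set (Finset E3)} {t t' : E3} (h : IsRASuspData L m S Z t t')
    (hfull : IsFullSubcomplex L Z) (hv : ∀ v, ({v} : Finset E3) ∈ Z ↔ v ∈ Nb L m t t')
    {a c : E3} (hac : a ≠ c) (hn : ¬ Adj L a c) (hc : c ∈ Vs L m t t') (ha : a = t) :
    S = Fs L (Vs L m a c) := by
  subst ha
  rcases hc with hc | hc | hc
  · exact absurd hc.symm hac
  · subst hc
    exact susp_form h hfull hv hn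
  · exact absurd hc.1.1 hn

theorem circ_in (hL : IsLabeledS2 L m) (hf : MetricFlag L m) {S : Set (Finset E3)}
    (hS : IsInfMaxRASusp L m S) {a b c d : E3} (hC : Circ L m a b c d)
    (ha : ({a} : Finset E3) ∈ S) (hb : ({b} : Finset E3) ∈ S) (hc : ({c} : Finset E3) ∈ S)
    (hd : ({d} : Finset E3) ∈ S) : S = Fs L (Vs L m a c) ∨ S = Fs L (Vs L m b d) := by
  obtain ⟨⟨Z, t, t', h, -, hfull⟩, hmax⟩ := hS
  have hv := maxV hL hf h hmax
  have hv' := maxV hL hf (data_swap h) hmax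
  have va := data_vs h ha (Finset.mem_singleton_self a)
  have vb := data_vs h hb (Finset.mem_singleton_self b)
  have vc := data_vs h hc (Finset.mem_singleton_self c)
  have vd := data_vs h hd (Finset.mem_singleton_self d)
  have va' := vs_comm (L := L) (m := m) t t' ▸ va
  have vb' := vs_comm (L := L) (m := m) t t' ▸ vb
  have vc' := vs_comm (L := L) (m := m) t t' ▸ vc
  have vd' := vs_comm (L := L) (m := m) t t' ▸ vd
  have nca : ¬ Adj L c a := fun h => hC.nac h.symm
  have ndb : ¬ Adj L d b := fun h => hC.nbd h.symm
  rcases va with e | e | na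
  · exact Or.inl (circ_in_aux h hfull hv hC.ac hC.nac vc e)
  · exact Or.inl (circ_in_aux (data_swap h) hfull hv' hC.ac hC.nac vc' e)
  rcases vb with e | e | nb
  · exact Or.inr (circ_in_aux h hfull hv hC.bd hC.nbd vd e)
  · exact Or.inr (circ_in_aux (data_swap h) hfull hv' hC.bd hC.nbd vd' e)
  rcases vc with e | e | nc
  · rw [vs_comm a c]
    exact Or.inl (circ_in_aux h hfull hv hC.ac.symm nca (Or.inr (Or.inr na)) e)
  · rw [vs_comm a c]
    exact Or.inl (circ_in_aux (data_swap h) hfull hv' hC.ac.symm nca va' e)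
  rcases vd with e | e | nd
  · rw [vs_comm b d]
    exact Or.inr (circ_in_aux h hfull hv hC.bd.symm ndb (Or.inr (Or.inr nb)) e)
  · rw [vs_comm b d]
    exact Or.inr (circ_in_aux (data_swap h) hfull hv' hC.bd.symm ndb vb' e)
  have hnt : ¬ Adj L t t' := by
    intro hadj
    refine planar5 hL (joinIn_mid hC.da.1.symm hC.cd.1.symm) (joinIn_pair hadj) na.1.1.symm
      nc.1.1.symm nc.2.1.symm na.2.1.symm hC.ab.1 nb.1.1 hC.bc.1.symm nb.2.1 hC.ac h.tne
      ?_ ?_ ?_ ?_ ?_ ?_ ?_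
    · rw [Set.disjoint_left]
      intro x hx hx'
      simp only [Set.mem_insert_iff, Set.mem_singleton_iff] at hx hx'
      rcases hx' with rfl | rfl <;> rcases hx with rfl | rfl | rfl
      · exact na.1.1.1 rfl
      · exact nd.1.1.1 rfl
      · exact nc.1.1.1 rfl
      · exact na.2.1.1 rfl
      · exact nd.2.1.1 rfl
      · exact nc.2.1.1 rfl
    · simp [na.1.1.1, nd.1.1.1, nc.1.1.1]
    · simp [na.2.1.1, nd.2.1.1, nc.2.1.1]
    · simp [hC.ab.1.1.symm, hC.bd, hC.bc.1.1]
    · simp [na.1.1.1.symm, na.2.1.1.symm]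
    · simp [nc.1.1.1.symm, nc.2.1.1.symm]
    · simp [nb.1.1.1.symm, nb.2.1.1.symm]
  left
  rw [susp_form h hfull hv hnt]
  congr 1
  ext x
  constructor
  · rintro (rfl | rfl | hx)
    · exact Or.inr (Or.inr ⟨na.1.symm hL, nc.1.symm hL⟩)
    · exact Or.inr (Or.inr ⟨na.2.symm hL, nc.2.symm hL⟩)
    · rcases oct hL na.1.1 nb.1.1 nc.1.1 nd.1.1 na.2.1 nb.2.1 nc.2.1 nd.2.1 hC.ab.1 hC.bc.1
        hC.cd.1 hC.da.1 h.tne hC.ac hC.bd hx.1.1 hx.2.1 with rfl | rfl | rfl | rfl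
      · exact Or.inl rfl
      · exact Or.inr (Or.inr (hC.nb hL).1)
      · exact Or.inr (Or.inl rfl)
      · exact Or.inr (Or.inr (hC.nb hL).2)
  · rintro (rfl | rfl | hx)
    · exact Or.inr (Or.inr na)
    · exact Or.inr (Or.inr nc)
    · rcases oct hL (t := a) (t' := c) (a := t) (b := b) (c := t') (d := d) na.1.1.symm hC.ab.1
        na.2.1.symm hC.da.1.symm nc.1.1.symm hC.bc.1.symm nc.2.1.symm hC.cd.1 nb.1.1 nb.2.1.symm
        nd.2.1 nd.1.1.symm hC.ac h.tne hC.bd hx.1.1 hx.2.1 with rfl | rfl | rfl | rfl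
      · exact Or.inl rfl
      · exact Or.inr (Or.inr nb)
      · exact Or.inr (Or.inl rfl)
      · exact Or.inr (Or.inr nd)

theorem fs_mono {W W' : Set E3} (h : W ⊆ W') : Fs L W ⊆ Fs L W' :=
  fun _ hF => ⟨hF.1, fun x hx => h (hF.2 x hx)⟩

theorem infmax_eq {S S' : Set (Finset E3)} (h : IsInfMaxRASusp L m S)
    (h' : IsInfMaxRASusp L m S') (hs : S ⊆ S') : S = S' := by
  obtain ⟨⟨Z, t, t', d, -, -⟩, -⟩ := h'
  exact h.2 S' ⟨Z, t, t', d⟩ hs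

theorem lemma5 (hL : IsLabeledS2 L m) {a b c d : E3} (hC : Circ L m a b c d)
    (h : IsInfMaxRASusp L m (Fs L (Vs L m a c))) (h' : IsInfMaxRASusp L m (Fs L (Vs L m b d))) :
    Fs L (Vs L m a c) = Fs L (Vs L m b d) ∨
      SeifertRel L m (Fs L (Vs L m a c)) (Fs L (Vs L m b d)) := by
  by_cases hx : ∃ x, x ∈ Nb L m a c ∧ x ∈ Nb L m b d
  · left
    obtain ⟨x, hx1, hx2⟩ := hx
    by_cases s1 : Vs L m a c ⊆ Vs L m b d
    · exact infmax_eq h h' (fs_mono s1)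
    by_cases s2 : Vs L m b d ⊆ Vs L m a c
    · exact (infmax_eq h' h (fs_mono s2)).symm
    exfalso
    rw [Set.not_subset] at s1 s2
    obtain ⟨e, he, he'⟩ := s1
    obtain ⟨f, hf, hf'⟩ := s2
    have nb' := (hC.rot).nb hL
    have nb := hC.nb hL
    have he2 : e ∈ Nb L m a c := by
      rcases he with rfl | rfl | he
      · exact absurd (Or.inr (Or.inr nb'.2)) he'
      · exact absurd (Or.inr (Or.inr nb'.1)) he'
      · exact he
    have hf2 : f ∈ Nb L m b d := by
      rcases hf with rfl | rfl | hf
      · exact absurd (Or.inr (Or.inr nb.1)) hf'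
      · exact absurd (Or.inr (Or.inr nb.2)) hf'
      · exact hf
    have eb : e ≠ b := fun g => he' (Or.inl g)
    have ed : e ≠ d := fun g => he' (Or.inr (Or.inl g))
    have ex : e ≠ x := fun g => he' (Or.inr (Or.inr (g ▸ hx2)))
    have fa : f ≠ a := fun g => hf' (Or.inl g)
    have fc : f ≠ c := fun g => hf' (Or.inr (Or.inl g))
    have fx : f ≠ x := fun g => hf' (Or.inr (Or.inr (g ▸ hx1)))
    have ef : e ≠ f := fun g => hf' (g ▸ he)
    refine planar5 hL (joinIn_mid he2.1.1 he2.2.1.symm) (joinIn_mid hf2.1.1 hf2.2.1.symm)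
      hC.ab.1 hC.bc.1.symm hC.cd.1 hC.da.1.symm hx1.1.1 hx2.1.1 hx1.2.1 hx2.2.1 hC.ac hC.bd
      ?_ ?_ ?_ ?_ ?_ ?_ ?_
    · rw [Set.disjoint_left]
      intro y hy hy'
      simp only [Set.mem_insert_iff, Set.mem_singleton_iff] at hy hy'
      rcases hy with rfl | rfl | rfl <;> rcases hy' with rfl | rfl | rfl
      · exact hC.ab.1.1 rfl
      · exact fa rfl
      · exact hC.da.1.1 rfl
      · exact eb rfl
      · exact ef rfl
      · exact ed rfl
      · exact hC.bc.1.1 rfl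
      · exact fc rfl
      · exact hC.cd.1.1 rfl
    · simp [hC.ab.1.1.symm, eb.symm, hC.bc.1.1]
    · simp [hC.da.1.1, ed.symm, hC.cd.1.1.symm]
    · simp [hx1.1.1.1.symm, ex.symm, hx1.2.1.1.symm]
    · simp [hC.ab.1.1, fa.symm, hC.da.1.1.symm]
    · simp [hC.bc.1.1.symm, fc.symm, hC.cd.1.1]
    · simp [hx2.1.1.1.symm, fx.symm, hx2.2.1.1.symm]
  · right
    refine ⟨h, h', ![a, b, c, d], hC.toEuclid, ?_⟩
    rw [← hC.fs]
    have nb' := (hC.rot).nb hL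
    have nb := hC.nb hL
    ext F
    constructor
    · rintro ⟨h1, h2⟩
      refine ⟨h1.1, fun y hy => ?_⟩
      simp only [Set.mem_insert_iff, Set.mem_singleton_iff]
      rcases h1.2 y hy with e | e | e
      · exact Or.inl e
      · exact Or.inr (Or.inr (Or.inl e))
      · rcases h2.2 y hy with e' | e' | e'
        · exact Or.inr (Or.inl e')
        · exact Or.inr (Or.inr (Or.inr e'))
        · exact absurd ⟨y, e, e'⟩ hx
    · intro hF
      constructor
      · refine ⟨hF.1, fun y hy => ?_⟩
        rcases hF.2 y hy with rfl | rfl | rfl | rfl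
        · exact Or.inl rfl
        · exact Or.inr (Or.inr nb.1)
        · exact Or.inr (Or.inl rfl)
        · exact Or.inr (Or.inr nb.2)
      · refine ⟨hF.1, fun y hy => ?_⟩
        rcases hF.2 y hy with rfl | rfl | rfl | rfl
        · exact Or.inr (Or.inr nb'.2)
        · exact Or.inl rfl
        · exact Or.inr (Or.inr nb'.1)
        · exact Or.inr (Or.inl rfl)

theorem lemma1 (hL : IsLabeledS2 L m) (hf : MetricFlag L m) {a b c d d' : E3}
    (hC : Circ L m a b c d) (hC' : Circ L m a b c d') (hd : d ≠ d') :
    IsInfMaxRASusp L m (Fs L (Vs L m a c)) := by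
  have nb := hC.nb hL
  have nb' := hC'.nb hL
  have hcard : ∀ F ∈ Fs L (Nb L m a c), F.card ≤ 2 := by
    intro F hF
    by_contra hcon
    obtain ⟨x, hx, y, hy, z, hz, hxy, hxz, hyz⟩ := Finset.two_lt_card.1 (not_le.1 hcon)
    have : ∃ w ∈ Nb L m a c, w ∉ F := by
      by_cases hb : b ∈ F
      · exact ⟨d, nb.2, fun hd => hC.nbd (adj_of_mem hF.1 hb hd hC.bd)⟩
      · exact ⟨b, nb.1, hb⟩
    obtain ⟨w, hw, hwF⟩ := this
    have nx := hF.2 x hx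
    have ny := hF.2 y hy
    have nz := hF.2 z hz
    have wx : w ≠ x := fun h => hwF (h ▸ hx)
    have wy : w ≠ y := fun h => hwF (h ▸ hy)
    have wz : w ≠ z := fun h => hwF (h ▸ hz)
    refine planar5 hL (joinIn_mid hw.1.1 hw.2.1.symm) (joinIn_pair (adj_of_mem hF.1 hx hy hxy))
      nx.1.1 nx.2.1 ny.2.1 ny.1.1 nz.1.1 (adj_of_mem hF.1 hx hz hxz) nz.2.1
      (adj_of_mem hF.1 hy hz hyz) hC.ac hxy ?_ ?_ ?_ ?_ ?_ ?_ ?_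
    · rw [Set.disjoint_left]
      intro u hu hu'
      simp only [Set.mem_insert_iff, Set.mem_singleton_iff] at hu hu'
      rcases hu' with rfl | rfl <;> rcases hu with rfl | rfl | rfl
      · exact nx.1.1.1 rfl
      · exact wx rfl
      · exact nx.2.1.1 rfl
      · exact ny.1.1.1 rfl
      · exact wy rfl
      · exact ny.2.1.1 rfl
    · simp [nx.1.1.1.symm, wx.symm, nx.2.1.1.symm]
    · simp [ny.1.1.1.symm, wy.symm, ny.2.1.1.symm]
    · simp [nz.1.1.1.symm, wz.symm, nz.2.1.1.symm]
    · simp [nx.1.1.1, ny.1.1.1]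
    · simp [nx.2.1.1, ny.2.1.1]
    · simp [hxz.symm, hyz.symm]
  have hi : ∀ F ∈ Fs L (Nb L m a c), insert a F ∈ L.faces ∧ insert c F ∈ L.faces := fun F hF =>
    ⟨ins_face hL hf hF.1 (hcard F hF) fun x hx => (hF.2 x hx).1,
      ins_face hL hf hF.1 (hcard F hF) fun x hx => (hF.2 x hx).2⟩
  have hj := join_fs hC.ac hC.nac hC.ab.1.vl hC.bc.1.vr hi
  have sb : ({b} : Finset E3) ∈ Fs L (Nb L m a c) := fs_single.2 ⟨hC.ab.1.vr, nb.1⟩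
  have sd : ({d} : Finset E3) ∈ Fs L (Nb L m a c) := fs_single.2 ⟨hC.da.1.vl, nb.2⟩
  have sd' : ({d'} : Finset E3) ∈ Fs L (Nb L m a c) := fs_single.2 ⟨hC'.da.1.vl, nb'.2⟩
  have hdata : IsRASuspData L m (Fs L (Vs L m a c)) (Fs L (Nb L m a c)) a c := by
    rw [← hj]
    refine mkdata (fun F hF => hF.1) ?_ ⟨_, sb⟩ hC.ac (fun F hF => hF.2) hi
    exact fun F hF G hG hGn => ⟨L.down_closed hF.1 hG hGn, fun x hx => hF.2 x (hG hx)⟩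
  refine ⟨⟨_, a, c, hdata, ⟨?_, ?_⟩, fun F hF => hF.1, ?_⟩, ?_⟩
  · rintro ⟨v, hv⟩
    rw [hv] at sb sd
    simp only [Set.mem_singleton_iff, Finset.singleton_inj] at sb sd
    exact hC.bd (sb.trans sd.symm)
  · rintro ⟨u, v, huv, hv⟩
    have key : ∀ x, ({x} : Finset E3) ∈ Fs L (Nb L m a c) → x = u ∨ x = v := by
      intro x hx
      rw [hv] at hx
      rcases hx with hx | hx | hx
      · exact Or.inl (Finset.singleton_inj.1 hx)
      · exact Or.inr (Finset.singleton_inj.1 hx)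
      · have := congrArg Finset.card hx
        rw [Finset.card_singleton, Finset.card_pair huv] at this
        omega
    have h1 := hC.bd
    have h2 := hC'.bd
    rcases key b sb with e1 | e1 <;> rcases key d sd with e2 | e2 <;>
      rcases key d' sd' with e3 | e3 <;> grind
  · intro F hF hv
    exact ⟨hF, fun x hx => (hv x hx).2 x (by simp)⟩
  · rintro T' ⟨Z, p, q, hT⟩ hsub
    have hV : ∀ x ∈ Vs L m a c, x ∈ Vs L m p q := by
      intro x hx
      have : ({x} : Finset E3) ∈ Fs L (Vs L m a c) := by
        refine fs_single.2 ⟨?_, hx⟩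
        rcases hx with rfl | rfl | hx
        · exact hC.ab.1.vl
        · exact hC.bc.1.vr
        · exact hx.1.1.vr
      exact data_vs hT (hsub this) (Finset.mem_singleton_self x)
    have va := hV a (Or.inl rfl)
    have vc := hV c (Or.inr (Or.inl rfl))
    have vb := hV b (Or.inr (Or.inr nb.1))
    have vd := hV d (Or.inr (Or.inr nb.2))
    have vd' := hV d' (Or.inr (Or.inr nb'.2))
    have hback : ∀ {p q : E3}, IsRASuspData L m T' Z p q → p = a → q = c →
        Fs L (Vs L m a c) = T' := by
      rintro p q hT rfl rfl
      exact hsub.antisymm fun F hF => ⟨hT.subset hF, fun x hx => data_vs hT hF hx⟩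
    rcases va with e | e | na
    · rcases vc with e' | e' | nc
      · exact absurd (e.trans e'.symm) hC.ac
      · exact hback hT e.symm e'.symm
      · exact absurd (e ▸ nc.1.1) hC.nac
    · rcases vc with e' | e' | nc
      · exact hback (data_swap hT) e.symm e'.symm
      · exact absurd (e.trans e'.symm) hC.ac
      · exact absurd (e ▸ nc.2.1) hC.nac
    rcases vc with e | e | nc
    · exact absurd (e ▸ na.1.1.symm) hC.nac
    · exact absurd (e ▸ na.2.1.symm) hC.nac
    exfalso
    have hb : b ∈ Nb L m p q := by
      rcases vb with e | e | nb
      · subst e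
        rcases vd with e | e | nd
        · exact absurd e.symm hC.bd
        · rcases vd' with e' | e' | nd'
          · exact absurd e'.symm hC'.bd
          · exact absurd (e.trans e'.symm) hd
          · exact absurd nd'.1.1 hC'.nbd
        · exact absurd nd.1.1 hC.nbd
      · subst e
        rcases vd with e | e | nd
        · rcases vd' with e' | e' | nd'
          · exact absurd (e.trans e'.symm) hd
          · exact absurd e'.symm hC'.bd
          · exact absurd nd'.2.1 hC'.nbd
        · exact absurd e.symm hC.bd
        · exact absurd nd.2.1 hC.nbd
      · exact nb
    have hd1 : d ∈ Nb L m p q := by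
      rcases vd with e | e | nd
      · exact absurd (e ▸ hb.1.1.symm) hC.nbd
      · exact absurd (e ▸ hb.2.1.symm) hC.nbd
      · exact nd
    have hd2 : d' ∈ Nb L m p q := by
      rcases vd' with e | e | nd
      · exact absurd (e ▸ hb.1.1.symm) hC'.nbd
      · exact absurd (e ▸ hb.2.1.symm) hC'.nbd
      · exact nd
    refine planar33 hL (t := a) (t' := c) (z' := p) (v := b) (v' := d) (z := d') nb.1.1.1
      nb.2.1.1 nb'.2.1.1 nb.1.2.1 nb.2.2.1 nb'.2.2.1 hb.1.1 hd1.1.1 (joinIn_pair hd2.1.1)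
      hC.ac hC.bd hd2.1.1.1.symm ?_ ?_ ?_ ?_
    · simp [na.1.1.1.symm, nb'.2.1.1.1]
    · simp [nc.1.1.1.symm, nb'.2.2.1.1]
    · simp [hb.1.1.1.symm, hC'.bd]
    · simp [hd1.1.1.1.symm, hd]

end Susp

section Sides

variable {L : SimplicialComplex ℝ E3} {m : E3 → E3 → ℕ}

/-- The vertices of a 4-circuit. -/
def Qs (t v t' v' : E3) : Set E3 := {x | x = t ∨ x = v ∨ x = t' ∨ x = v'}

/-- The side of the 4-circuit containing the other common neighbours of `t`, `t'`. -/
def Sd (L : SimplicialComplex ℝ E3) (m : E3 → E3 → ℕ) (t v t' v' : E3) : Set E3 :=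
  {x | ∃ z ∈ Nb L m t t', z ∉ Qs t v t' v' ∧ JoinIn L (Qs t v t' v')ᶜ z x}

variable {t v t' v' : E3}

theorem sd_not {x : E3} (h : x ∈ Sd L m t v t' v') : x ∉ Qs t v t' v' := by
  obtain ⟨z, -, -, hJ⟩ := h
  exact hJ.mem_right.1

theorem sd1 {x : E3} (h : x ∈ Nb L m t t') (hx : x ∉ Qs t v t' v') : x ∈ Sd L m t v t' v' :=
  ⟨x, h, hx, hx, h.1.1.vr, Relation.ReflTransGen.refl⟩

theorem sd2 {x y : E3} (h : x ∈ Sd L m t v t' v') (hxy : Adj L x y) (hy : y ∉ Qs t v t' v') :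
    y ∈ Sd L m t v t' v' := by
  obtain ⟨z, h1, h2, hJ⟩ := h
  exact ⟨z, h1, h2, hJ.1, hJ.2.1, hJ.2.2.tail ⟨hxy.1, hxy.2, hJ.mem_right.1, hy⟩⟩

theorem sd2' {x y : E3} (h : x ∈ Sd L m t v t' v') (hxy : Adj L x y) :
    y ∈ Sd L m t v t' v' ∨ y ∈ Qs t v t' v' := by
  by_cases hy : y ∈ Qs t v t' v'
  · exact Or.inr hy
  · exact Or.inl (sd2 h hxy hy)

theorem sd3 (hL : IsLabeledS2 L m) (hC : Circ L m t v t' v')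
    (hdis : ∀ x, x ∈ Nb L m t t' → x ∉ Nb L m v v') {x : E3} (hx : x ∈ Nb L m v v')
    (h : x ∈ Sd L m t v t' v') : False := by
  obtain ⟨z, h1, h2, hJ⟩ := h
  refine planar33 hL (t := v) (t' := v') (z' := z) (v := t) (v' := t') (z := x)
    hC.ab.1.symm hC.bc.1 hx.1.1 hC.da.1 hC.cd.1.symm hx.2.1 h1.1.1.symm h1.2.1.symm hJ hC.bd hC.ac
    (fun e => hdis z h1 (e ▸ hx)) ?_ ?_ ?_ ?_ <;> simp [Qs]

theorem qpair (hC : Circ L m t v t' v') {p q : E3} (hp : p ∈ Qs t v t' v')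
    (hq : q ∈ Qs t v t' v') (hpq : p ≠ q) (hn : ¬ Adj L p q) :
    (p = t ∧ q = t') ∨ (p = t' ∧ q = t) ∨ (p = v ∧ q = v') ∨ (p = v' ∧ q = v) := by
  rcases hp with rfl | rfl | rfl | rfl <;> rcases hq with rfl | rfl | rfl | rfl
  · exact absurd rfl hpq
  · exact absurd hC.ab.1 hn
  · exact Or.inl ⟨rfl, rfl⟩
  · exact absurd hC.da.1.symm hn
  · exact absurd hC.ab.1.symm hn
  · exact absurd rfl hpq
  · exact absurd hC.bc.1 hn
  · exact Or.inr (Or.inr (Or.inl ⟨rfl, rfl⟩))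
  · exact Or.inr (Or.inl ⟨rfl, rfl⟩)
  · exact absurd hC.bc.1.symm hn
  · exact absurd rfl hpq
  · exact absurd hC.cd.1 hn
  · exact absurd hC.da.1 hn
  · exact Or.inr (Or.inr (Or.inr ⟨rfl, rfl⟩))
  · exact absurd hC.cd.1.symm hn
  · exact absurd rfl hpq

theorem qnb (hC : Circ L m t v t' v') {p q : E3} (hp : p ∈ Qs t v t' v')
    (hq : q ∈ Qs t v t' v') (hpq : p ≠ q) (hn : ¬ Adj L p q) :
    Nb L m p q = Nb L m t t' ∨ Nb L m p q = Nb L m v v' := by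
  rcases qpair hC hp hq hpq hn with ⟨rfl, rfl⟩ | ⟨rfl, rfl⟩ | ⟨rfl, rfl⟩ | ⟨rfl, rfl⟩
  · exact Or.inl rfl
  · exact Or.inl (nb_comm _ _)
  · exact Or.inr rfl
  · exact Or.inr (nb_comm _ _)

theorem qvs (hC : Circ L m t v t' v') {p q : E3} (hp : p ∈ Qs t v t' v')
    (hq : q ∈ Qs t v t' v') (hpq : p ≠ q) (hn : ¬ Adj L p q) :
    Vs L m p q = Vs L m t t' ∨ Vs L m p q = Vs L m v v' := by
  rcases qpair hC hp hq hpq hn with ⟨rfl, rfl⟩ | ⟨rfl, rfl⟩ | ⟨rfl, rfl⟩ | ⟨rfl, rfl⟩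
  · exact Or.inl rfl
  · exact Or.inl (vs_comm _ _)
  · exact Or.inr rfl
  · exact Or.inr (vs_comm _ _)

theorem sd4 (hL : IsLabeledS2 L m) (hC : Circ L m t v t' v')
    (hdis : ∀ x, x ∈ Nb L m t t' → x ∉ Nb L m v v') {p q r s : E3} (h : Circ L m p q r s)
    (hp : p ∈ Sd L m t v t' v') :
    (q ∈ Sd L m t v t' v' ∨ q ∈ Qs t v t' v') ∧ (r ∈ Sd L m t v t' v' ∨ r ∈ Qs t v t' v') ∧
    (s ∈ Sd L m t v t' v' ∨ s ∈ Qs t v t' v') := by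
  have hq := sd2' hp h.ab.1
  have hs := sd2' hp h.da.1.symm
  refine ⟨hq, ?_, hs⟩
  rcases hq with hq | hq
  · exact sd2' hq h.bc.1
  rcases hs with hs | hs
  · exact sd2' hs h.cd.1.symm
  have n := h.rot.nb hL
  rcases qnb hC hq hs h.bd h.nbd with e | e
  · by_cases hr : r ∈ Qs t v t' v'
    · exact Or.inr hr
    · exact Or.inl (sd1 (e ▸ n.1) hr)
  · exact (sd3 hL hC hdis (e ▸ n.2) hp).elim

theorem sd5 (hL : IsLabeledS2 L m) (hC : Circ L m t v t' v')
    (hdis : ∀ x, x ∈ Nb L m t t' → x ∉ Nb L m v v') {p q x y : E3} (h : Circ L m p x q y) :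
    (∀ w ∈ Vs L m p q, w ∈ Sd L m t v t' v' ∨ w ∈ Qs t v t' v') ∨
    (∀ w ∈ Vs L m p q, w ∉ Sd L m t v t' v') := by
  by_cases hw : ∃ w ∈ Vs L m p q, w ∈ Sd L m t v t' v'
  swap
  · right
    push Not at hw
    exact hw
  left
  have hP : ∀ {p q x y : E3}, Circ L m p x q y → p ∈ Sd L m t v t' v' →
      ∀ w ∈ Vs L m p q, w ∈ Sd L m t v t' v' ∨ w ∈ Qs t v t' v' := by
    rintro p q x y h hp w (rfl | rfl | hw)
    · exact Or.inl hp
    · exact (sd4 hL hC hdis h hp).2.1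
    · exact sd2' hp hw.1.1
  have hQ : q ∈ Sd L m t v t' v' →
      ∀ w ∈ Vs L m p q, w ∈ Sd L m t v t' v' ∨ w ∈ Qs t v t' v' := by
    intro hq
    rw [vs_comm]
    exact hP (h.refl hL) hq
  obtain ⟨w, hw | hw | hw, hwA⟩ := hw
  · exact hP h (hw ▸ hwA)
  · exact hQ (hw ▸ hwA)
  rcases sd2' hwA hw.1.1.symm with hp | hp
  · exact hP h hp
  rcases sd2' hwA hw.2.1.symm with hq | hq
  · exact hQ hq
  rcases qnb hC hp hq h.ac h.nac with e | e
  · rintro u (rfl | rfl | hu)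
    · exact Or.inr hp
    · exact Or.inr hq
    · by_cases hr : u ∈ Qs t v t' v'
      · exact Or.inr hr
      · exact Or.inl (sd1 (e ▸ hu) hr)
  · exact (sd3 hL hC hdis (e ▸ hw) hwA).elim

/-- A suspension containing a Euclidean circuit through its suspension points. -/
def Good (L : SimplicialComplex ℝ E3) (m : E3 → E3 → ℕ) (S : Set (Finset E3)) : Prop :=
  IsInfMaxRASusp L m S ∧ ∃ p x q y, Circ L m p x q y ∧ S = Fs L (Vs L m p q)

theorem vs_single {p x q y : E3} (h : Circ L m p x q y) {w : E3} :
    ({w} : Finset E3) ∈ Fs L (Vs L m p q) ↔ w ∈ Vs L m p q := by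
  rw [fs_single]
  refine ⟨fun g => g.2, fun g => ⟨?_, g⟩⟩
  rcases g with rfl | rfl | g
  · exact h.ab.1.vl
  · exact h.bc.1.vr
  · exact g.1.1.vr

theorem seif_symm {S S' : Set (Finset E3)} (h : SeifertRel L m S S') : SeifertRel L m S' S := by
  obtain ⟨h1, h2, w, h3, h4⟩ := h
  exact ⟨h2, h1, w, h3, by rw [Set.inter_comm]; exact h4⟩

theorem seif_circ (hL : IsLabeledS2 L m) (hf : MetricFlag L m) {S S' : Set (Finset E3)}
    (h : SeifertRel L m S S') : ∃ a b c d, Circ L m a b c d ∧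
      (∀ x, ({x} : Finset E3) ∈ S ∧ ({x} : Finset E3) ∈ S' ↔ x ∈ Qs a b c d) ∧
      (S = Fs L (Vs L m a c) ∨ S = Fs L (Vs L m b d)) ∧
      (S' = Fs L (Vs L m a c) ∨ S' = Fs L (Vs L m b d)) := by
  obtain ⟨h1, h2, w, h3, h4⟩ := h
  have hC := circ_of hL hf h3
  have hx : ∀ x, ({x} : Finset E3) ∈ S ∧ ({x} : Finset E3) ∈ S' ↔
      x ∈ Qs (w 0) (w 1) (w 2) (w 3) := by
    intro x
    change ({x} : Finset E3) ∈ S ∩ S' ↔ _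
    rw [h4]
    constructor
    · rintro (⟨i, hi⟩ | ⟨i, hi⟩)
      · rw [Finset.singleton_inj] at hi
        subst hi
        fin_cases i
        · exact Or.inl rfl
        · exact Or.inr (Or.inl rfl)
        · exact Or.inr (Or.inr (Or.inl rfl))
        · exact Or.inr (Or.inr (Or.inr rfl))
      · have := congrArg Finset.card hi
        rw [Finset.card_singleton, Finset.card_pair (h3.1.ne (by fin_cases i <;> decide))] at this
        omega
    · rintro (rfl | rfl | rfl | rfl)
      · exact Or.inl ⟨0, rfl⟩
      · exact Or.inl ⟨1, rfl⟩
      · exact Or.inl ⟨2, rfl⟩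
      · exact Or.inl ⟨3, rfl⟩
  have g0 := (hx (w 0)).2 (Or.inl rfl)
  have g1 := (hx (w 1)).2 (Or.inr (Or.inl rfl))
  have g2 := (hx (w 2)).2 (Or.inr (Or.inr (Or.inl rfl)))
  have g3 := (hx (w 3)).2 (Or.inr (Or.inr (Or.inr rfl)))
  exact ⟨w 0, w 1, w 2, w 3, hC, hx, circ_in hL hf h1 hC g0.1 g1.1 g2.1 g3.1,
    circ_in hL hf h2 hC g0.2 g1.2 g2.2 g3.2⟩

theorem seif_good (hL : IsLabeledS2 L m) (hf : MetricFlag L m) {S S' : Set (Finset E3)}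
    (h : SeifertRel L m S S') : Good L m S := by
  obtain ⟨a, b, c, d, hC, -, h1 | h1, -⟩ := seif_circ hL hf h
  · exact ⟨h.1, _, _, _, _, hC, h1⟩
  · exact ⟨h.1, _, _, _, _, hC.rot, h1⟩

theorem link_struct (hL : IsLabeledS2 L m) (hf : MetricFlag L m) {S S' : Set (Finset E3)}
    (h : SeifertRel L m S S') (hne : S ≠ S') : ∃ t v t' v', Circ L m t v t' v' ∧
      S = Fs L (Vs L m t t') ∧ S' = Fs L (Vs L m v v') ∧
      (∀ x, x ∈ Nb L m t t' → x ∉ Nb L m v v') := by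
  obtain ⟨a, b, c, d, hC, hx, h1, h2⟩ := seif_circ hL hf h
  have key : ∀ x, ({x} : Finset E3) ∈ S → ({x} : Finset E3) ∈ S' → x ∈ Nb L m a c →
      x ∉ Nb L m b d := by
    intro x x1 x2 n1 n2
    rcases (hx x).1 ⟨x1, x2⟩ with rfl | rfl | rfl | rfl
    · exact n1.1.1.1 rfl
    · exact n2.1.1.1 rfl
    · exact n1.2.1.1 rfl
    · exact n2.2.1.1 rfl
  rcases h1 with h1 | h1 <;> rcases h2 with h2 | h2
  · exact absurd (h1.trans h2.symm) hne
  · refine ⟨a, b, c, d, hC, h1, h2, fun x n1 n2 => key x ?_ ?_ n1 n2⟩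
    · rw [h1]; exact (vs_single hC).2 (Or.inr (Or.inr n1))
    · rw [h2]; exact (vs_single hC.rot).2 (Or.inr (Or.inr n2))
  · have hC' := hC.rot
    refine ⟨b, a, d, c, ?_, h1, h2, fun x n2 n1 => key x ?_ ?_ n1 n2⟩
    · exact (hC.refl hL).rot
    · rw [h1]; exact (vs_single hC.rot).2 (Or.inr (Or.inr n2))
    · rw [h2]; exact (vs_single hC).2 (Or.inr (Or.inr n1))
  · exact absurd (h1.trans h2.symm) hne

theorem nocross (hL : IsLabeledS2 L m) (hf : MetricFlag L m) {S S' S1 S2 : Set (Finset E3)}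
    (hC : Circ L m t v t' v') (hS : S = Fs L (Vs L m t t')) (hS' : S' = Fs L (Vs L m v v'))
    (hI : IsInfMaxRASusp L m S) (hI' : IsInfMaxRASusp L m S') (hne : S ≠ S')
    (hR : SeifertRel L m S1 S2)
    (h1 : ∀ x, ({x} : Finset E3) ∈ S1 → x ∈ Sd L m t v t' v' ∨ x ∈ Qs t v t' v')
    (h2 : ∀ x, ({x} : Finset E3) ∈ S2 → x ∉ Sd L m t v t' v') : S2 = S' := by
  obtain ⟨a, b, c, d, hD, hx, -, h4⟩ := seif_circ hL hf hR
  have hq : ∀ x, x ∈ Qs a b c d → x ∈ Qs t v t' v' := fun x hxq =>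
    (h1 x ((hx x).2 hxq).1).resolve_left (h2 x ((hx x).2 hxq).2)
  have qa := hq a (Or.inl rfl)
  have qb := hq b (Or.inr (Or.inl rfl))
  have qc := hq c (Or.inr (Or.inr (Or.inl rfl)))
  have qd := hq d (Or.inr (Or.inr (Or.inr rfl)))
  have : S2 = S ∨ S2 = S' := by
    rw [hS, hS']
    rcases h4 with h4 | h4 <;> rw [h4]
    · exact (qvs hC qa qc hD.ac hD.nac).imp (congrArg _) (congrArg _)
    · exact (qvs hC qb qd hD.bd hD.nbd).imp (congrArg _) (congrArg _)
  rcases this with e | e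
  · exfalso
    apply hne
    refine infmax_eq hI hI' ?_
    rw [hS, hS']
    apply fs_mono
    intro x hxV
    have hxS2 : x ∉ Sd L m t v t' v' := h2 x (by rw [e, hS]; exact (vs_single hC).2 hxV)
    have hxQ : x ∈ Qs t v t' v' := by
      rcases hxV with rfl | rfl | hn
      · exact Or.inl rfl
      · exact Or.inr (Or.inr (Or.inl rfl))
      · by_contra hq
        exact hxS2 (sd1 hn hq)
    have n := hC.rot.nb hL
    rcases hxQ with rfl | rfl | rfl | rfl
    · exact Or.inr (Or.inr n.2)
    · exact Or.inl rfl
    · exact Or.inr (Or.inr n.1)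
    · exact Or.inr (Or.inl rfl)
  · exact e

/-- Connected families grown from a base element. -/
inductive Conn {α : Type} (R : α → α → Prop) (S₀ : α) : Set α → Prop
  | base : Conn R S₀ {S₀}
  | step (F : Set α) (S S' : α) : Conn R S₀ F → S ∈ F → R S S' → Conn R S₀ (insert S' F)

theorem Conn.const {α : Type} {R : α → α → Prop} {S₀ : α} {F : Set α} (h : Conn R S₀ F)
    (p : α → Prop) (hp : ∀ x ∈ F, ∀ y ∈ F, R x y → (p x ↔ p y)) : ∀ x ∈ F, (p S₀ ↔ p x) := by
  induction h with
  | base => rintro x rfl; rfl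
  | step F S S' hF hS hR ih =>
    have ih' := ih fun x hx y hy => hp x (Or.inr hx) y (Or.inr hy)
    rintro x (rfl | hx)
    · exact (ih' S hS).trans (hp S (Or.inr hS) x (Or.inl rfl) hR)
    · exact ih' x hx

theorem Conn.reach {α : Type} {R : α → α → Prop} {S₀ : α} {F : Set α} (h : Conn R S₀ F) :
    ∀ x ∈ F, Relation.ReflTransGen R S₀ x := by
  induction h with
  | base => rintro x rfl; exact Relation.ReflTransGen.refl
  | step F S S' hF hS hR ih =>
    rintro x (rfl | hx)
    · exact (ih S hS).tail hR
    · exact ih x hx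

theorem Conn.base_mem {α : Type} {R : α → α → Prop} {S₀ : α} {F : Set α} (h : Conn R S₀ F) :
    S₀ ∈ F := by
  induction h with
  | base => rfl
  | step F S S' hF hS hR ih => exact Or.inr ih

theorem Conn.grow {α : Type} {R : α → α → Prop} {S₀ : α} {F : Set α} (h : Conn R S₀ F) {x : α}
    (hx : Relation.ReflTransGen R S₀ x) : ∃ F', Conn R S₀ F' ∧ F ⊆ F' ∧ x ∈ F' := by
  induction hx with
  | refl => exact ⟨F, h, subset_rfl, h.base_mem⟩
  | tail _ hR ih =>
    obtain ⟨F', h1, h2, h3⟩ := ih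
    exact ⟨_, Conn.step F' _ _ h1 h3 hR, h2.trans (Set.subset_insert _ _), Or.inl rfl⟩

theorem eqv_reach {α : Type} {R : α → α → Prop} (hs : ∀ x y, R x y → R y x) {x y : α}
    (h : Relation.EqvGen R x y) : Relation.ReflTransGen R x y ∧ Relation.ReflTransGen R y x := by
  induction h with
  | rel x y h => exact ⟨.single h, .single (hs _ _ h)⟩
  | refl => exact ⟨.refl, .refl⟩
  | symm x y _ ih => exact ih.symm
  | trans x y z _ _ i1 i2 => exact ⟨i1.1.trans i2.1, i2.2.trans i1.2⟩

theorem reach_eqv {α : Type} {R : α → α → Prop} {x y : α}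
    (h : Relation.ReflTransGen R x y) : Relation.EqvGen R x y := by
  induction h with
  | refl => exact .refl _
  | tail _ h ih => exact ih.trans _ _ _ (.rel _ _ h)

theorem circ_conn (hL : IsLabeledS2 L m) (hf : MetricFlag L m) {S₀ : Set (Finset E3)}
    {F : Set (Set (Finset E3))} (hF : Conn (SeifertRel L m) S₀ F) {a b c d : E3}
    (hC : Circ L m a b c d) (hx : ∀ x ∈ Qs a b c d, ∃ S ∈ F, ({x} : Finset E3) ∈ S) :
    ∃ S ∈ F, ∀ x ∈ Qs a b c d, ({x} : Finset E3) ∈ S := by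
  induction hF with
  | base =>
    refine ⟨S₀, rfl, fun x hxq => ?_⟩
    obtain ⟨S, rfl, h⟩ := hx x hxq
    exact h
  | step F S S' hF hS hR ih =>
    by_cases hmem : S' ∈ F
    · rw [Set.insert_eq_of_mem hmem] at hx ⊢
      exact ih hx
    have hne : S ≠ S' := fun e => hmem (e ▸ hS)
    obtain ⟨t, v, t', v', hK, e1, e2, hdis⟩ := link_struct hL hf hR hne
    -- every member of `F` lies on the side of `S`
    have hpS : ∀ x, ({x} : Finset E3) ∈ S → x ∈ Sd L m t v t' v' ∨ x ∈ Qs t v t' v' := by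
      intro x hxS
      rw [e1, vs_single hK] at hxS
      rcases hxS with rfl | rfl | hn
      · exact Or.inr (Or.inl rfl)
      · exact Or.inr (Or.inr (Or.inr (Or.inl rfl)))
      · by_cases hq : x ∈ Qs t v t' v'
        · exact Or.inr hq
        · exact Or.inl (sd1 hn hq)
    have hstep : ∀ S1 ∈ F, ∀ S2 ∈ F, SeifertRel L m S1 S2 →
        (∀ x, ({x} : Finset E3) ∈ S1 → x ∈ Sd L m t v t' v' ∨ x ∈ Qs t v t' v') →
        (∀ x, ({x} : Finset E3) ∈ S2 → x ∈ Sd L m t v t' v' ∨ x ∈ Qs t v t' v') := by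
      intro S1 m1 S2 m2 hR12 hp1
      obtain ⟨-, p, u, q, w, hC2, e3⟩ := seif_good hL hf (seif_symm hR12)
      rcases sd5 hL hK hdis hC2 with h | h
      · intro x hxS
        rw [e3, vs_single hC2] at hxS
        exact h x hxS
      · exfalso
        refine hmem ((nocross hL hf hK e1 e2 hR.1 hR.2.1 hne hR12 hp1 ?_) ▸ m2)
        intro x hxS
        rw [e3, vs_single hC2] at hxS
        exact h x hxS
    have hconst := hF.const
      (fun S1 => ∀ x, ({x} : Finset E3) ∈ S1 → x ∈ Sd L m t v t' v' ∨ x ∈ Qs t v t' v')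
      (fun S1 m1 S2 m2 hr => ⟨hstep S1 m1 S2 m2 hr, hstep S2 m2 S1 m1 (seif_symm hr)⟩)
    have hall : ∀ S1 ∈ F, ∀ x, ({x} : Finset E3) ∈ S1 →
        x ∈ Sd L m t v t' v' ∨ x ∈ Qs t v t' v' := fun S1 m1 =>
      (hconst S1 m1).1 ((hconst S hS).2 hpS)
    have n := hK.rot.nb hL
    have n' := hK.nb hL
    have hS'A : ∀ x, ({x} : Finset E3) ∈ S' → x ∉ Sd L m t v t' v' := by
      intro x hxS hxA
      rw [e2, vs_single hK.rot] at hxS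
      rcases hxS with rfl | rfl | hn
      · exact sd_not hxA (Or.inr (Or.inl rfl))
      · exact sd_not hxA (Or.inr (Or.inr (Or.inr rfl)))
      · exact sd3 hL hK hdis hn hxA
    have hQS : ∀ x ∈ Qs t v t' v', ({x} : Finset E3) ∈ S := by
      intro x hxq
      rw [e1, vs_single hK]
      rcases hxq with rfl | rfl | rfl | rfl
      · exact Or.inl rfl
      · exact Or.inr (Or.inr n'.1)
      · exact Or.inr (Or.inl rfl)
      · exact Or.inr (Or.inr n'.2)
    have hQS' : ∀ x ∈ Qs t v t' v', ({x} : Finset E3) ∈ S' := by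
      intro x hxq
      rw [e2, vs_single hK.rot]
      rcases hxq with rfl | rfl | rfl | rfl
      · exact Or.inr (Or.inr n.2)
      · exact Or.inl rfl
      · exact Or.inr (Or.inr n.1)
      · exact Or.inr (Or.inl rfl)
    by_cases hA : ∃ x ∈ Qs a b c d, x ∈ Sd L m t v t' v'
    · have hAQ : ∀ x ∈ Qs a b c d, x ∈ Sd L m t v t' v' ∨ x ∈ Qs t v t' v' := by
        obtain ⟨y, hy, hyA⟩ := hA
        rcases hy with rfl | rfl | rfl | rfl
        · have := sd4 hL hK hdis hC hyA
          rintro x (rfl | rfl | rfl | rfl)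
          exacts [Or.inl hyA, this.1, this.2.1, this.2.2]
        · have := sd4 hL hK hdis hC.rot hyA
          rintro x (rfl | rfl | rfl | rfl)
          exacts [this.2.2, Or.inl hyA, this.1, this.2.1]
        · have := sd4 hL hK hdis hC.rot.rot hyA
          rintro x (rfl | rfl | rfl | rfl)
          exacts [this.2.1, this.2.2, Or.inl hyA, this.1]
        · have := sd4 hL hK hdis hC.rot.rot.rot hyA
          rintro x (rfl | rfl | rfl | rfl)
          exacts [this.1, this.2.1, this.2.2, Or.inl hyA]
      obtain ⟨S1, m1, h1⟩ := ih fun x hxq => by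
        rcases hAQ x hxq with h | h
        · obtain ⟨S1, rfl | m1, h1⟩ := hx x hxq
          · exact absurd h (hS'A x h1)
          · exact ⟨S1, m1, h1⟩
        · exact ⟨S, hS, hQS x h⟩
      exact ⟨S1, Or.inr m1, h1⟩
    · refine ⟨S', Or.inl rfl, fun x hxq => ?_⟩
      obtain ⟨S1, rfl | m1, h1⟩ := hx x hxq
      · exact h1
      · rcases hall S1 m1 x h1 with h | h
        · exact absurd ⟨x, hxq, h⟩ hA
        · exact hQS' x h

theorem lemma6 (hL : IsLabeledS2 L m) (hf : MetricFlag L m) {S₀ : Set (Finset E3)}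
    (h0 : IsInfMaxRASusp L m S₀) {a b c d : E3} (hC : Circ L m a b c d)
    (hx : ∀ x ∈ Qs a b c d, ({x} : Finset E3) ∈
      ⋃₀ {S | IsInfMaxRASusp L m S ∧ Relation.EqvGen (SeifertRel L m) S₀ S}) :
    ∃ S, IsInfMaxRASusp L m S ∧ Relation.EqvGen (SeifertRel L m) S₀ S ∧
      (S = Fs L (Vs L m a c) ∨ S = Fs L (Vs L m b d)) := by
  have hy : ∀ x ∈ Qs a b c d, ∃ S, Relation.ReflTransGen (SeifertRel L m) S₀ S ∧
      ({x} : Finset E3) ∈ S := by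
    intro x hxq
    obtain ⟨S, ⟨-, h2⟩, h3⟩ := hx x hxq
    exact ⟨S, (eqv_reach (fun _ _ => seif_symm) h2).1, h3⟩
  obtain ⟨Sa, ra, ha⟩ := hy a (Or.inl rfl)
  obtain ⟨Sb, rb, hb⟩ := hy b (Or.inr (Or.inl rfl))
  obtain ⟨Sc, rc, hc⟩ := hy c (Or.inr (Or.inr (Or.inl rfl)))
  obtain ⟨Se, rd, hd⟩ := hy d (Or.inr (Or.inr (Or.inr rfl)))
  obtain ⟨F1, c1, -, m1⟩ := (Conn.base (R := SeifertRel L m) (S₀ := S₀)).grow ra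
  obtain ⟨F2, c2, s2, m2⟩ := c1.grow rb
  obtain ⟨F3, c3, s3, m3⟩ := c2.grow rc
  obtain ⟨F4, c4, s4, m4⟩ := c3.grow rd
  obtain ⟨S, mS, hS⟩ := circ_conn hL hf c4 hC (by
    rintro x (rfl | rfl | rfl | rfl)
    · exact ⟨Sa, s4 (s3 (s2 m1)), ha⟩
    · exact ⟨Sb, s4 (s3 m2), hb⟩
    · exact ⟨Sc, s4 m3, hc⟩
    · exact ⟨Se, m4, hd⟩)
  have hr := c4.reach S mS
  have hI : IsInfMaxRASusp L m S := by
    rcases Relation.ReflTransGen.cases_tail hr with rfl | ⟨_, -, h⟩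
    · exact h0
    · exact h.2.1
  exact ⟨S, hI, reach_eqv hr, circ_in hL hf hI hC (hS a (Or.inl rfl)) (hS b (Or.inr (Or.inl rfl)))
    (hS c (Or.inr (Or.inr (Or.inl rfl)))) (hS d (Or.inr (Or.inr (Or.inr rfl))))⟩

theorem rel_of (hL : IsLabeledS2 L m) {a b c d : E3} (hC : Circ L m a b c d)
    {S T : Set (Finset E3)} (hS : IsInfMaxRASusp L m S) (hT : IsInfMaxRASusp L m T)
    (h : S = Fs L (Vs L m a c) ∨ S = Fs L (Vs L m b d))
    (h' : T = Fs L (Vs L m a c) ∨ T = Fs L (Vs L m b d)) :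
    Relation.EqvGen (SeifertRel L m) S T := by
  rcases h with rfl | rfl <;> rcases h' with rfl | rfl
  · exact .refl _
  · rcases lemma5 hL hC hS hT with e | e
    · rw [e]; exact .refl _
    · exact .rel _ _ e
  · rcases lemma5 hL hC hT hS with e | e
    · rw [e]; exact .refl _
    · exact .symm _ _ (.rel _ _ e)
  · exact .refl _

theorem edge_circ (hL : IsLabeledS2 L m) (hf : MetricFlag L m) {w : Fin 4 → E3}
    (h : IsEuclidean4Circuit L m w) {e₁ e₂ : Finset E3} (hne : e₁ ≠ e₂)
    (h1 : ∃ i : Fin 4, e₁ = ({w i, w (i + 1)} : Finset E3))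
    (h2 : ∃ i : Fin 4, e₂ = ({w i, w (i + 1)} : Finset E3))
    (hs : (e₁ ∩ e₂).Nonempty) : ∃ a b c d, Circ L m a b c d ∧ e₁ = {a, b} ∧ e₂ = {b, c} ∧
      ∀ x ∈ Qs a b c d, ∃ i, x = w i := by
  have h0 := circ_of hL hf h
  have hi : ∀ i : Fin 4, Circ L m (w i) (w (i + 1)) (w (i + 2)) (w (i + 3)) := by
    intro i
    fin_cases i
    · exact h0
    · exact h0.rot
    · exact h0.rot.rot
    · exact h0.rot.rot.rot
  obtain ⟨i, rfl⟩ := h1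
  obtain ⟨j, rfl⟩ := h2
  have hj : j = i ∨ j = i + 1 ∨ j = i + 2 ∨ j = i + 3 := by clear hne hs; revert i j; decide
  have hC := hi i
  rcases hj with rfl | rfl | rfl | rfl
  · exact absurd rfl hne
  · refine ⟨_, _, _, _, hC, rfl, ?_, ?_⟩
    · rw [add_assoc]; rfl
    · rintro x (rfl | rfl | rfl | rfl) <;> exact ⟨_, rfl⟩
  · exfalso
    rw [add_assoc, show (2 + 1 : Fin 4) = 3 from rfl] at hs
    obtain ⟨x, hx⟩ := hs
    rw [Finset.mem_inter] at hx
    simp only [Finset.mem_insert, Finset.mem_singleton] at hx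
    have g1 := hC.ac
    have g2 := hC.bd
    have g3 := hC.bc.1.1
    have g4 := hC.da.1.1
    rcases hx with ⟨e | e, e' | e'⟩
    · exact g1 (e.symm.trans e')
    · exact g4 (e'.symm.trans e)
    · exact g3 (e.symm.trans e')
    · exact g2 (e.symm.trans e')
  · rw [add_assoc, show (3 + 1 : Fin 4) = 0 from rfl, add_zero]
    refine ⟨_, _, _, _, (hC.refl hL).rot, Finset.pair_comm _ _, Finset.pair_comm _ _, ?_⟩
    rintro x (rfl | rfl | rfl | rfl) <;> exact ⟨_, rfl⟩

theorem pair_match {a b c a' b' c' : E3} (hab : a ≠ b) (hbc : b ≠ c) (hac : a ≠ c)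
    (hab' : a' ≠ b') (hbc' : b' ≠ c') (hac' : a' ≠ c')
    (h1 : ({a, b} : Finset E3) = {a', b'}) (h2 : ({b, c} : Finset E3) = {b', c'}) :
    a = a' ∧ b = b' ∧ c = c' := by
  have k1 := fun x => congrArg (x ∈ ·) h1
  have k2 := fun x => congrArg (x ∈ ·) h2
  simp only [Finset.mem_insert, Finset.mem_singleton, eq_iff_iff] at k1 k2
  have p1 := k1 a
  have p2 := k1 b
  have p3 := k2 b
  have p4 := k2 c
  have p5 := k1 a'
  have p6 := k2 c'
  clear k1 k2 h1 h2
  grind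

end Sides

/-- Let `D₁, D₂` be Seifert subcomplexes of a metric flag labeled triangulation
of the 2-sphere, and let `C₁ ⊆ D₁`, `C₂ ⊆ D₂` be Euclidean 4-circuits each of
whose edges lies in at most one 2-simplex of the containing Seifert subcomplex.
If `C₁` and `C₂` have two edges in common which share a vertex, then
`D₁ = D₂`. -/
theorem seifert_eq_of_shared_boundary_edges
    (L : SimplicialComplex ℝ E3) (m : E3 → E3 → ℕ)
    (hL : IsLabeledS2 L m) (hflag : MetricFlag L m)
    (D₁ D₂ : Set (Finset E3))
    (h₁ : IsSeifertSubcomplex L m D₁) (h₂ : IsSeifertSubcomplex L m D₂)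
    (v₁ v₂ : Fin 4 → E3)
    (hv₁ : IsEuclidean4Circuit L m v₁) (hv₂ : IsEuclidean4Circuit L m v₂)
    (hsub₁ : circuitComplex v₁ ⊆ D₁) (hsub₂ : circuitComplex v₂ ⊆ D₂)
    (hbd₁ : ∀ i : Fin 4, {G : Finset E3 | G ∈ L.faces ∧ G.card = 3 ∧
      ({v₁ i, v₁ (i + 1)} : Finset E3) ⊆ G ∧ G ∈ D₁}.Subsingleton)
    (hbd₂ : ∀ i : Fin 4, {G : Finset E3 | G ∈ L.faces ∧ G.card = 3 ∧
      ({v₂ i, v₂ (i + 1)} : Finset E3) ⊆ G ∧ G ∈ D₂}.Subsingleton)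
    (e₁ e₂ : Finset E3) (hne : e₁ ≠ e₂)
    (he₁C₁ : ∃ i : Fin 4, e₁ = ({v₁ i, v₁ (i + 1)} : Finset E3))
    (he₁C₂ : ∃ i : Fin 4, e₁ = ({v₂ i, v₂ (i + 1)} : Finset E3))
    (he₂C₁ : ∃ i : Fin 4, e₂ = ({v₁ i, v₁ (i + 1)} : Finset E3))
    (he₂C₂ : ∃ i : Fin 4, e₂ = ({v₂ i, v₂ (i + 1)} : Finset E3))
    (hshare : (e₁ ∩ e₂).Nonempty) :
    D₁ = D₂ := by
  obtain ⟨S₀, hS₀, rfl⟩ := h₁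
  obtain ⟨T₀, hT₀, rfl⟩ := h₂
  obtain ⟨a, b, c, d, hC, p1, p2, hr⟩ := edge_circ hL hflag hv₁ hne he₁C₁ he₂C₁ hshare
  obtain ⟨a', b', c', d', hC', p1', p2', hr'⟩ := edge_circ hL hflag hv₂ hne he₁C₂ he₂C₂ hshare
  obtain ⟨rfl, rfl, rfl⟩ := pair_match hC.ab.1.1 hC.bc.1.1 hC.ac hC'.ab.1.1 hC'.bc.1.1 hC'.ac
    (p1.symm.trans p1') (p2.symm.trans p2')
  obtain ⟨S, hS, rS, eS⟩ := lemma6 hL hflag hS₀ hC fun x hx => by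
    obtain ⟨i, rfl⟩ := hr x hx
    exact hsub₁ (Or.inl ⟨i, rfl⟩)
  obtain ⟨T, hT, rT, eT⟩ := lemma6 hL hflag hT₀ hC' fun x hx => by
    obtain ⟨i, rfl⟩ := hr' x hx
    exact hsub₂ (Or.inl ⟨i, rfl⟩)
  have hST : Relation.EqvGen (SeifertRel L m) S T := by
    by_cases hd : d = d'
    · subst hd
      exact rel_of hL hC hS hT eS eT
    · have hM := lemma1 hL hflag hC hC' hd
      exact .trans _ _ _ (rel_of hL hC hS hM eS (Or.inl rfl))
        (rel_of hL hC' hM hT (Or.inl rfl) eT)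
  have h0 : Relation.EqvGen (SeifertRel L m) S₀ T₀ :=
    .trans _ _ _ (.trans _ _ _ rS hST) (.symm _ _ rT)
  congr 1
  ext U
  exact ⟨fun h => ⟨h.1, .trans _ _ _ (.symm _ _ h0) h.2⟩, fun h => ⟨h.1, .trans _ _ _ h0 h.2⟩⟩
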